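/- arXiv:1604.00316 — 5 statements merged into one kernel-verified Lean document; each statement's English description precedes it below -/
import Mathlib

section
/- Let α, β, γ, δ, p be rational numbers with p > 0, √p irrational and β ≠ 0 (i.e., β√p ∉ ℚ). Let u = α + β√p and suppose u > 0, and let v = δ·u + γ with v > 0. Then v ∈ B(u) if and only if either (γ = 0 and δ > 0) or else (α ≠ 0, γ·(α² − β²p)/α > 0, and δ + γ/(2α) ≥ 0). -/
/-- `R` is an axis-parallel closed rectangle with side lengths `w` (horizontal)
and `h` (vertical), both positive. -/
def IsRect (R : Set (ℝ × ℝ)) (w h : ℝ) : Prop :=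
  0 < w ∧ 0 < h ∧ ∃ x y : ℝ, R = Set.Icc x (x + w) ×ˢ Set.Icc y (y + h)

/-- The rectangle `R` is tiled by finitely many axis-parallel rectangles, each of
whose side ratios belongs to `ratios`: the tiles cover `R` and have pairwise
disjoint interiors. -/
def TiledBy (R : Set (ℝ × ℝ)) (ratios : Set ℝ) : Prop :=
  ∃ (m : ℕ) (T : Fin m → Set (ℝ × ℝ)) (w h : Fin m → ℝ),
    (∀ i, IsRect (T i) (w i) (h i)) ∧
    (∀ i, w i / h i ∈ ratios ∨ h i / w i ∈ ratios) ∧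
    (⋃ i, T i) = R ∧
    Pairwise fun i j => Disjoint (interior (T i)) (interior (T j))

/-- `BSet ratios` is the set of positive reals `z` such that some axis-parallel
rectangle with side ratio `z` can be tiled by finitely many axis-parallel
rectangles each of whose side ratio belongs to `ratios`. -/
def BSet (ratios : Set ℝ) : Set ℝ :=
  {z | ∃ (W H : ℝ) (R : Set (ℝ × ℝ)),
    IsRect R W H ∧ (z = W / H ∨ z = H / W) ∧ TiledBy R ratios}

/-!
Write `S` and `N` for the trace and norm of `u`, so that `u ^ 2 = S * u - N`.

Sufficiency: similar copies of tiled rectangles can be placed side by side, so `B(u)` is closed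
under addition, inversion and multiplication by positive rationals; and
`δ * u + γ = (δ + γ / S) * u + (γ * N / S) * u⁻¹`.

Necessity: a `ℚ`-bilinear form `F` on `ℝ` is additive over tilings, because on the finitely many
coordinates that occur it agrees with a polynomial, whose mixed partial derivative is an area
density. Hence `F z 1 ≥ 0` for `z ∈ B(u)` as soon as `F` is nonnegative on the sides of rectangles
of side ratio `u`. For `τ : ℝ → ℝ` `ℚ`-linear, `F x y = τ (u * x) * τ (u * y) + N * τ x * τ y`
satisfies `F (u * t) t = S * τ (u * t) ^ 2`, so `S * F` is such a form. Since `1` and `u` are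
independent over `ℚ`, the values `τ 1` and `τ u` are arbitrary, and
`F (δ * u + γ) 1 = (δ * S + γ) * τ u ^ 2 + N * γ * τ 1 ^ 2` yields the two inequalities. If `S = 0`,
both `F` and `-F` qualify, which forces `γ = 0`.
-/

open MeasureTheory

variable {R R' T : Set (ℝ × ℝ)} {ratios : Set ℝ} {w h : ℝ}

namespace IsRect

lemma convex (hR : IsRect R w h) : Convex ℝ R := by
  obtain ⟨-, -, x, y, rfl⟩ := hR
  exact (convex_Icc _ _).prod (convex_Icc _ _)

lemma isCompact (hR : IsRect R w h) : IsCompact R := by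
  obtain ⟨-, -, x, y, rfl⟩ := hR
  exact isCompact_Icc.prod isCompact_Icc

lemma image_swap (hR : IsRect R w h) : IsRect (Prod.swap '' R) h w := by
  obtain ⟨hw, hh, x, y, rfl⟩ := hR
  exact ⟨hh, hw, y, x, Set.image_swap_prod _ _⟩

end IsRect

/-- The homothety `(x, y) ↦ (c * x + a, c * y + b)` of the plane, used to move and rescale
tilings. -/
noncomputable def homothety (c a b : ℝ) (hc : 0 < c) : ℝ × ℝ ≃ₜ ℝ × ℝ :=
  (affineHomeomorph c a hc.ne').prodCongr (affineHomeomorph c b hc.ne')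

lemma homothety_image_Icc_prod_Icc {c : ℝ} (hc : 0 < c) (a b x x' y y' : ℝ) :
    homothety c a b hc '' (Set.Icc x x' ×ˢ Set.Icc y y') =
      Set.Icc (c * x + a) (c * x' + a) ×ˢ Set.Icc (c * y + b) (c * y' + b) := by
  rw [homothety, Homeomorph.coe_prodCongr, Set.prodMap_image_prod,
    affineHomeomorph_image_Icc _ _ _ _ hc, affineHomeomorph_image_Icc _ _ _ _ hc]

lemma IsRect.image_homothety (hR : IsRect R w h) {c : ℝ} (hc : 0 < c) (a b : ℝ) :
    IsRect (homothety c a b hc '' R) (c * w) (c * h) := by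
  obtain ⟨hw, hh, x, y, rfl⟩ := hR
  refine ⟨mul_pos hc hw, mul_pos hc hh, c * x + a, c * y + b, ?_⟩
  rw [homothety_image_Icc_prod_Icc, mul_add, mul_add, add_right_comm, add_right_comm (c * y)]

lemma IsRect.exists_homothety_image_eq {c : ℝ} (hc : 0 < c) (hR : IsRect R w h)
    (hR' : IsRect R' (c * w) (c * h)) : ∃ a b, homothety c a b hc '' R = R' := by
  obtain ⟨-, -, x, y, rfl⟩ := hR
  obtain ⟨-, -, x', y', rfl⟩ := hR'
  refine ⟨x' - c * x, y' - c * y, ?_⟩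
  rw [homothety_image_Icc_prod_Icc]
  congr 2 <;> ring

/-- `T` is an axis-parallel rectangle one of whose two side ratios lies in `ratios`: the condition
`TiledBy` imposes on each tile. -/
def IsTile (T : Set (ℝ × ℝ)) (ratios : Set ℝ) : Prop :=
  ∃ w h, IsRect T w h ∧ (w / h ∈ ratios ∨ h / w ∈ ratios)

namespace IsTile

lemma image_swap (hT : IsTile T ratios) : IsTile (Prod.swap '' T) ratios := by
  obtain ⟨w, h, hT, hr⟩ := hT
  exact ⟨h, w, hT.image_swap, hr.symm⟩

lemma image_homothety (hT : IsTile T ratios) {c : ℝ} (hc : 0 < c) (a b : ℝ) :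
    IsTile (homothety c a b hc '' T) ratios := by
  obtain ⟨w, h, hT, hr⟩ := hT
  refine ⟨c * w, c * h, hT.image_homothety hc a b, ?_⟩
  rwa [mul_div_mul_left _ _ hc.ne', mul_div_mul_left _ _ hc.ne']

end IsTile

lemma tiledBy_iff : TiledBy R ratios ↔ ∃ (ι : Type) (_ : Finite ι) (T : ι → Set (ℝ × ℝ)),
    (∀ i, IsTile (T i) ratios) ∧ ⋃ i, T i = R ∧
      Pairwise fun i j => Disjoint (interior (T i)) (interior (T j)) := by
  constructor
  · rintro ⟨m, T, w, h, hT, hr, hU, hd⟩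
    exact ⟨Fin m, inferInstance, T, fun i => ⟨w i, h i, hT i, hr i⟩, hU, hd⟩
  · rintro ⟨ι, _, T, hT, hU, hd⟩
    choose w h hT hr using hT
    obtain ⟨m, ⟨e⟩⟩ := Finite.exists_equiv_fin ι
    refine ⟨m, T ∘ e.symm, w ∘ e.symm, h ∘ e.symm, fun i => hT _, fun i => hr _, ?_,
      hd.comp_of_injective e.symm.injective⟩
    rw [← hU]
    exact e.symm.surjective.iUnion_comp T

namespace TiledBy

lemma image (e : ℝ × ℝ ≃ₜ ℝ × ℝ) (he : ∀ T, IsTile T ratios → IsTile (e '' T) ratios)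
    (hR : TiledBy R ratios) : TiledBy (e '' R) ratios := by
  obtain ⟨ι, hι, T, hT, rfl, hd⟩ := tiledBy_iff.1 hR
  refine tiledBy_iff.2 ⟨ι, hι, fun i => e '' T i, fun i => he _ (hT i), Set.image_iUnion.symm,
    fun i j hij => ?_⟩
  simpa only [← e.image_interior, Set.disjoint_image_iff e.injective] using hd hij

lemma union (hR : TiledBy R ratios) (hR' : TiledBy R' ratios)
    (hd : Disjoint (interior R) (interior R')) : TiledBy (R ∪ R') ratios := by
  obtain ⟨ι, _, T, hT, rfl, hTd⟩ := tiledBy_iff.1 hR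
  obtain ⟨κ, _, T', hT', rfl, hTd'⟩ := tiledBy_iff.1 hR'
  have hcross : ∀ i j, Disjoint (interior (T i)) (interior (T' j)) := fun i j =>
    hd.mono (interior_mono (Set.subset_iUnion T i)) (interior_mono (Set.subset_iUnion T' j))
  refine tiledBy_iff.2 ⟨ι ⊕ κ, inferInstance, Sum.elim T T', ?_, Set.iUnion_sumElim _ _, ?_⟩
  · rintro (i | j)
    exacts [hT i, hT' j]
  · rintro (i | i) (j | j) hij
    · exact hTd (ne_of_apply_ne _ hij)
    · exact hcross i j
    · exact (hcross j i).symm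
    · exact hTd' (ne_of_apply_ne _ hij)

end TiledBy

lemma IsTile.tiledBy (hT : IsTile T ratios) : TiledBy T ratios :=
  tiledBy_iff.2 ⟨Unit, inferInstance, fun _ => T, fun _ => hT, Set.iUnion_const T,
    fun _ _ hij => (hij rfl).elim⟩

section BSet

variable {z z' : ℝ}

lemma pos_of_mem_bSet (hz : z ∈ BSet ratios) : 0 < z := by
  obtain ⟨W, H, R, ⟨hW, hH, -⟩, rfl | rfl, -⟩ := hz <;> positivity

lemma inv_mem_bSet (hz : z ∈ BSet ratios) : z⁻¹ ∈ BSet ratios := by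
  obtain ⟨W, H, R, hR, hz, hT⟩ := hz
  exact ⟨W, H, R, hR, hz.symm.imp (by simp [·]) (by simp [·]), hT⟩

lemma exists_isRect_div_eq_of_mem_bSet (hz : z ∈ BSet ratios) :
    ∃ W H R, IsRect R W H ∧ W / H = z ∧ TiledBy R ratios := by
  obtain ⟨W, H, R, hR, rfl | rfl, hT⟩ := hz
  · exact ⟨W, H, R, hR, rfl, hT⟩
  · exact ⟨H, W, Prod.swap '' R, hR.image_swap, rfl,
      hT.image (Homeomorph.prodComm ℝ ℝ) fun _ h => h.image_swap⟩

lemma IsRect.tiledBy_of_div_mem_bSet (hR : IsRect R w h) (hz : w / h ∈ BSet ratios) :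
    TiledBy R ratios := by
  obtain ⟨W, H, R₀, hR₀, hWH, hT⟩ := exists_isRect_div_eq_of_mem_bSet hz
  have hh : 0 < h := hR.2.1
  have hH : 0 < H := hR₀.2.1
  have hc : 0 < h / H := div_pos hh hH
  have hw : h / H * W = w := by
    field_simp at hWH ⊢
    linarith
  obtain ⟨a, b, rfl⟩ := hR₀.exists_homothety_image_eq hc
    (by rwa [hw, div_mul_cancel₀ h hH.ne'])
  exact hT.image _ fun _ hT => hT.image_homothety hc a b

lemma mem_bSet_of_mem (hz : z ∈ ratios) (hz0 : 0 < z) : z ∈ BSet ratios := by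
  have hR : IsRect (Set.Icc 0 (0 + z) ×ˢ Set.Icc 0 (0 + 1)) z 1 := ⟨hz0, one_pos, 0, 0, rfl⟩
  exact ⟨z, 1, _, hR, .inl (div_one z).symm, IsTile.tiledBy ⟨z, 1, hR, .inl (by rwa [div_one])⟩⟩

lemma add_mem_bSet (hz : z ∈ BSet ratios) (hz' : z' ∈ BSet ratios) : z + z' ∈ BSet ratios := by
  have hz0 := pos_of_mem_bSet hz
  have hz0' := pos_of_mem_bSet hz'
  have left : TiledBy (Set.Icc 0 z ×ˢ Set.Icc 0 1) ratios :=
    IsRect.tiledBy_of_div_mem_bSet ⟨hz0, one_pos, 0, 0, by simp only [zero_add]⟩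
      (by rwa [div_one])
  have right : TiledBy (Set.Icc z (z + z') ×ˢ Set.Icc 0 1) ratios :=
    IsRect.tiledBy_of_div_mem_bSet ⟨hz0', one_pos, z, 0, by simp only [zero_add]⟩
      (by rwa [div_one])
  have hdisj : Disjoint (interior (Set.Icc 0 z ×ˢ Set.Icc (0 : ℝ) 1))
      (interior (Set.Icc z (z + z') ×ˢ Set.Icc (0 : ℝ) 1)) := by
    simp only [interior_prod_eq, interior_Icc, Set.disjoint_prod]
    exact .inl (Set.Ioo_disjoint_Ioo.2 (by simp))
  refine ⟨z + z', 1, _, ⟨add_pos hz0 hz0', one_pos, 0, 0, ?_⟩, .inl (div_one _).symm,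
    left.union right hdisj⟩
  rw [← Set.union_prod, Set.Icc_union_Icc_eq_Icc hz0.le (by linarith), zero_add, zero_add]

lemma natCast_mul_mem_bSet {n : ℕ} (hn : n ≠ 0) (hz : z ∈ BSet ratios) :
    (n : ℝ) * z ∈ BSet ratios := by
  induction n, Nat.one_le_iff_ne_zero.2 hn using Nat.le_induction with
  | base => simpa using hz
  | succ n hn1 ih =>
    rw [Nat.cast_succ, add_one_mul]
    exact add_mem_bSet (ih (Nat.one_le_iff_ne_zero.1 hn1)) hz

lemma ratCast_mul_mem_bSet {q : ℚ} (hq : 0 < q) (hz : z ∈ BSet ratios) :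
    (q : ℝ) * z ∈ BSet ratios := by
  have hdiv : z / q.den ∈ BSet ratios := by
    simpa [div_eq_mul_inv, mul_comm] using
      inv_mem_bSet (natCast_mul_mem_bSet q.den_nz (inv_mem_bSet hz))
  have hnum : (q.num.toNat : ℤ) = q.num := Int.toNat_of_nonneg (Rat.num_nonneg.2 hq.le)
  have hq_cast : (q : ℝ) = (q.num.toNat : ℝ) / q.den := by
    rw [Rat.cast_def, ← hnum, Int.cast_natCast, Int.toNat_natCast]
  have hnum0 : q.num.toNat ≠ 0 := by have := Rat.num_pos.2 hq; lia
  rw [hq_cast, div_mul_eq_mul_div, mul_div_assoc]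
  exact natCast_mul_mem_bSet hnum0 hdiv

lemma ratCast_mul_add_mem_bSet {q : ℚ} (hq : 0 ≤ q) (hz : z ∈ BSet ratios)
    (hz' : z' ∈ BSet ratios) : (q : ℝ) * z + z' ∈ BSet ratios := by
  rcases hq.eq_or_lt with rfl | hq
  · simpa using hz'
  · exact add_mem_bSet (ratCast_mul_mem_bSet hq hz) hz'

end BSet

section BilinMap

variable (F : LinearMap.BilinMap ℚ ℝ ℝ)

lemma setIntegral_Icc_derivative_eval (P : Polynomial ℝ) {a b : ℝ} (hab : a ≤ b) :
    ∫ x in Set.Icc a b, P.derivative.eval x = P.eval b - P.eval a := by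
  rw [integral_Icc_eq_integral_Ioc, ← intervalIntegral.integral_of_le hab]
  exact intervalIntegral.integral_eq_sub_of_hasDerivAt (fun x _ => P.hasDerivAt x)
    (P.derivative.continuous.intervalIntegrable _ _)

lemma setIntegral_prod_derivative_eval (P Q : Polynomial ℝ) {a b c d : ℝ} (hab : a ≤ b)
    (hcd : c ≤ d) :
    ∫ z in Set.Icc a b ×ˢ Set.Icc c d, P.derivative.eval z.1 * Q.derivative.eval z.2 =
      (P.eval b - P.eval a) * (Q.eval d - Q.eval c) := by
  rw [Measure.volume_eq_prod, setIntegral_prod_mul (fun x => P.derivative.eval x)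
    (fun y => Q.derivative.eval y), setIntegral_Icc_derivative_eval P hab,
    setIntegral_Icc_derivative_eval Q hcd]

lemma exists_polynomial_eval_eq_bilinMap (A B : Finset ℝ) :
    ∃ P Q : ℝ → Polynomial ℝ, ∀ x ∈ A, ∀ y ∈ B,
      ∑ b ∈ B, (P b).eval x * (Q b).eval y = F x y := by
  classical
  refine ⟨fun b => Lagrange.interpolate A id (F · b), Lagrange.basis B id, fun x hx y hy => ?_⟩
  have hP (b : ℝ) : (Lagrange.interpolate A id (F · b)).eval x = F x b :=
    Lagrange.eval_interpolate_at_node (v := id) _ (Set.injOn_id _) hx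
  have hQ : (Lagrange.interpolate B id (F x)).eval y = F x y :=
    Lagrange.eval_interpolate_at_node (v := id) _ (Set.injOn_id _) hy
  simp only [hP]
  simpa [Lagrange.interpolate_apply, Polynomial.eval_finsetSum] using hQ

lemma exists_continuous_setIntegral_eq_bilinMap (A B : Finset ℝ) :
    ∃ f : ℝ × ℝ → ℝ, Continuous f ∧ ∀ {x y w h : ℝ}, 0 ≤ w → 0 ≤ h →
      x ∈ A → x + w ∈ A → y ∈ B → y + h ∈ B →
        ∫ z in Set.Icc x (x + w) ×ˢ Set.Icc y (y + h), f z = F w h := by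
  obtain ⟨P, Q, hPQ⟩ := exists_polynomial_eval_eq_bilinMap F A B
  refine ⟨fun z => ∑ b ∈ B, (P b).derivative.eval z.1 * (Q b).derivative.eval z.2, by fun_prop, ?_⟩
  intro x y w h hw hh hx hxw hy hyh
  have hint (b : ℝ) : IntegrableOn
      (fun z : ℝ × ℝ => (P b).derivative.eval z.1 * (Q b).derivative.eval z.2)
      (Set.Icc x (x + w) ×ˢ Set.Icc y (y + h)) :=
    (Continuous.continuousOn (by fun_prop)).integrableOn_compact
      (isCompact_Icc.prod isCompact_Icc)
  rw [integral_finsetSum _ fun b _ => hint b]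
  simp_rw [setIntegral_prod_derivative_eval _ _ (le_add_of_nonneg_right hw)
    (le_add_of_nonneg_right hh), sub_mul, mul_sub, Finset.sum_sub_distrib]
  rw [hPQ _ hxw _ hyh, hPQ _ hxw _ hy, hPQ _ hx _ hyh, hPQ _ hx _ hy]
  simp only [map_add, LinearMap.add_apply]
  ring

lemma IsRect.aedisjoint (hR : IsRect R w h) {w' h' : ℝ} (hR' : IsRect R' w' h')
    (hd : Disjoint (interior R) (interior R')) : AEDisjoint volume R R' :=
  hd.aedisjoint.congr (interior_ae_eq_of_null_frontier (hR.convex.addHaar_frontier _)).symm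
    (interior_ae_eq_of_null_frontier (hR'.convex.addHaar_frontier _)).symm

lemma bilinMap_eq_sum_of_tiling {ι : Type*} [Fintype ι] {T : ι → Set (ℝ × ℝ)} {w h : ι → ℝ}
    {W H : ℝ} (hR : IsRect (⋃ i, T i) W H) (hT : ∀ i, IsRect (T i) (w i) (h i))
    (hd : Pairwise fun i j => Disjoint (interior (T i)) (interior (T j))) :
    F W H = ∑ i, F (w i) (h i) := by
  obtain ⟨hW, hH, X, Y, hXY⟩ := id hR
  choose hw hh x y hxy using id hT
  obtain ⟨f, hf, hfF⟩ := exists_continuous_setIntegral_eq_bilinMap F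
    ({X, X + W} ∪ (Finset.univ.image x ∪ Finset.univ.image (x + w)))
    ({Y, Y + H} ∪ (Finset.univ.image y ∪ Finset.univ.image (y + h)))
  calc F W H = ∫ z in ⋃ i, T i, f z := by
        rw [hXY, hfF hW.le hH.le] <;> simp
    _ = ∑ i, ∫ z in T i, f z := by
        rw [integral_iUnion_ae (fun i => (hT i).isCompact.measurableSet.nullMeasurableSet)
          (fun i j hij => (hT i).aedisjoint (hT j) (hd hij))
          (hf.continuousOn.integrableOn_compact hR.isCompact), tsum_fintype]
    _ = ∑ i, F (w i) (h i) := Finset.sum_congr rfl fun i _ => by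
        rw [hxy i, hfF (hw i).le (hh i).le] <;> simp

variable {F}

lemma TiledBy.bilinMap_nonneg {W H : ℝ} (hT : TiledBy R ratios) (hR : IsRect R W H)
    (hF : ∀ r ∈ ratios, ∀ t, 0 ≤ F (r * t) t ∧ 0 ≤ F t (r * t)) : 0 ≤ F W H := by
  obtain ⟨m, T, w, h, hT, hr, rfl, hd⟩ := hT
  rw [bilinMap_eq_sum_of_tiling F hR hT hd]
  refine Finset.sum_nonneg fun i _ => ?_
  obtain ⟨hw, hh, -⟩ := hT i
  rcases hr i with hr | hr
  · simpa [div_mul_cancel₀ _ hh.ne'] using (hF _ hr (h i)).1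
  · simpa [div_mul_cancel₀ _ hw.ne'] using (hF _ hr (w i)).2

lemma bilinMap_nonneg_of_mem_bSet {z : ℝ} (hz : z ∈ BSet ratios)
    (hF : ∀ r ∈ ratios, ∀ t, 0 ≤ F (r * t) t ∧ 0 ≤ F t (r * t)) : 0 ≤ F z 1 := by
  obtain ⟨W, H, R, hR, rfl, hT⟩ := exists_isRect_div_eq_of_mem_bSet hz
  have hscaled := hT.bilinMap_nonneg
    (F := F.compl₁₂ (LinearMap.mulRight ℚ H⁻¹) (LinearMap.mulRight ℚ H⁻¹)) hR fun r hr t => by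
      simpa [mul_assoc] using hF r hr (t * H⁻¹)
  simpa [div_eq_mul_inv, hR.2.1.ne'] using hscaled

end BilinMap

section Quadratic

variable {u : ℝ} {S N : ℚ}

/-- For a `ℚ`-linear `τ : ℝ → ℝ`, the symmetric `ℚ`-bilinear form
`(x, y) ↦ τ (u * x) * τ (u * y) + N * τ x * τ y`. When `u` is quadratic over `ℚ` with norm `N`, its
values on the sides of a rectangle of side ratio `u` are squares up to a constant factor, the trace
of `u`. -/
noncomputable def tileForm (u : ℝ) (N : ℚ) (τ : ℝ →ₗ[ℚ] ℝ) : LinearMap.BilinMap ℚ ℝ ℝ :=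
  (LinearMap.mul ℚ ℝ).compl₁₂ (τ ∘ₗ LinearMap.mulLeft ℚ u) (τ ∘ₗ LinearMap.mulLeft ℚ u) +
    N • (LinearMap.mul ℚ ℝ).compl₁₂ τ τ

lemma tileForm_apply (u : ℝ) (N : ℚ) (τ : ℝ →ₗ[ℚ] ℝ) (x y : ℝ) :
    tileForm u N τ x y = τ (u * x) * τ (u * y) + N * (τ x * τ y) := by
  simp [tileForm, Rat.smul_def]

lemma tileForm_comm (u : ℝ) (N : ℚ) (τ : ℝ →ₗ[ℚ] ℝ) (x y : ℝ) :
    tileForm u N τ x y = tileForm u N τ y x := by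
  simp only [tileForm_apply, mul_comm]

lemma map_mul_mul_of_sq_eq (hu : u ^ 2 = S * u - N) (τ : ℝ →ₗ[ℚ] ℝ) (x : ℝ) :
    τ (u * (u * x)) = S * τ (u * x) - N * τ x := by
  have hux : u * (u * x) = S • (u * x) - N • x := by
    simp only [Rat.smul_def]
    linear_combination x * hu
  rw [hux, map_sub, map_smul, map_smul, Rat.smul_def, Rat.smul_def]

lemma tileForm_mul_self (hu : u ^ 2 = S * u - N) (τ : ℝ →ₗ[ℚ] ℝ) (t : ℝ) :
    tileForm u N τ (u * t) t = S * τ (u * t) ^ 2 := by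
  rw [tileForm_apply, map_mul_mul_of_sq_eq hu]
  ring

lemma tileForm_mul_add_one (hu : u ^ 2 = S * u - N) (τ : ℝ →ₗ[ℚ] ℝ) (δ γ : ℚ) :
    tileForm u N τ (δ * u + γ) 1 = (δ * S + γ) * τ u ^ 2 + N * γ * τ 1 ^ 2 := by
  have hlin : (δ * u + γ : ℝ) = δ • (u * 1) + γ • (1 : ℝ) := by simp [Rat.smul_def]
  have hone : tileForm u N τ 1 1 = τ u ^ 2 + N * τ 1 ^ 2 := by
    rw [tileForm_apply, mul_one]
    ring
  rw [hlin, map_add, map_smul, map_smul, LinearMap.add_apply, LinearMap.smul_apply,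
    LinearMap.smul_apply, tileForm_mul_self hu, hone, mul_one, Rat.smul_def, Rat.smul_def]
  ring

lemma mul_tileForm_nonneg_of_mem_bSet (hu : u ^ 2 = S * u - N) {c : ℚ} (hc : 0 ≤ c * S)
    (τ : ℝ →ₗ[ℚ] ℝ) {z : ℝ} (hz : z ∈ BSet {u}) : 0 ≤ c * tileForm u N τ z 1 := by
  have hc' : (0 : ℝ) ≤ c * S := by exact_mod_cast hc
  have htile (t : ℝ) : 0 ≤ c * tileForm u N τ (u * t) t := by
    rw [tileForm_mul_self hu, ← mul_assoc]
    positivity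
  rw [← Rat.smul_def]
  refine bilinMap_nonneg_of_mem_bSet (F := c • tileForm u N τ) hz fun r hr t => ?_
  rw [Set.mem_singleton_iff.1 hr, LinearMap.smul_apply, LinearMap.smul_apply, LinearMap.smul_apply,
    LinearMap.smul_apply, tileForm_comm _ _ _ t, Rat.smul_def]
  exact ⟨htile t, htile t⟩

lemma exists_linearMap_one_eq_and_eq_of_irrational (hu : Irrational u) (a b : ℝ) :
    ∃ τ : ℝ →ₗ[ℚ] ℝ, τ 1 = a ∧ τ u = b := by
  have hli : LinearIndependent ℚ ![1, u] := by
    refine (LinearIndependent.pair_iff' one_ne_zero).2 fun q hq => hu ⟨q, ?_⟩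
    simpa [Rat.smul_def] using hq
  obtain ⟨g, hg⟩ := (Finsupp.linearCombination ℚ ![1, u]).exists_leftInverse_of_injective
    (LinearMap.ker_eq_bot.2 hli)
  let τ := Finsupp.linearCombination ℚ ![a, b] ∘ₗ g
  have hτ (i : Fin 2) : τ (![1, u] i) = ![a, b] i := by
    have hgi := LinearMap.congr_fun hg (Finsupp.single i 1)
    rw [LinearMap.comp_apply, Finsupp.linearCombination_single, one_smul] at hgi
    simp [τ, hgi]
  exact ⟨τ, hτ 0, hτ 1⟩

lemma coeff_nonneg_of_mem_bSet (hu_irr : Irrational u) (hu : u ^ 2 = S * u - N) {c δ γ : ℚ}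
    (hc : 0 ≤ c * S) (hz : (δ * u + γ : ℝ) ∈ BSet {u}) :
    0 ≤ c * (δ * S + γ) ∧ 0 ≤ c * (N * γ) := by
  have hform (a b : ℝ) : (0 : ℝ) ≤ c * ((δ * S + γ) * b ^ 2 + N * γ * a ^ 2) := by
    obtain ⟨τ, rfl, rfl⟩ := exists_linearMap_one_eq_and_eq_of_irrational hu_irr a b
    rw [← tileForm_mul_add_one hu]
    exact mul_tileForm_nonneg_of_mem_bSet hu hc τ hz
  constructor
  · have h01 : (0 : ℝ) ≤ c * (δ * S + γ) := by simpa using hform 0 1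
    exact_mod_cast h01
  · have h10 : (0 : ℝ) ≤ c * (N * γ) := by simpa using hform 1 0
    exact_mod_cast h10

lemma trace_ne_zero_of_mem_bSet (hu_irr : Irrational u) (hu : u ^ 2 = S * u - N) {δ γ : ℚ}
    (hγ : γ ≠ 0) (hz : (δ * u + γ : ℝ) ∈ BSet {u}) : S ≠ 0 := by
  rintro rfl
  have hγ_nonneg := (coeff_nonneg_of_mem_bSet hu_irr hu (c := 1) (by simp) hz).1
  have hγ_nonpos := (coeff_nonneg_of_mem_bSet hu_irr hu (c := -1) (by simp) hz).1
  exact hγ (by linarith)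

lemma norm_ne_zero_of_sq_eq (hu_irr : Irrational u) (hu : u ^ 2 = S * u - N) : N ≠ 0 := by
  rintro rfl
  exact hu_irr ⟨S, mul_right_cancel₀ hu_irr.ne_zero (by linear_combination -hu)⟩

lemma pos_and_nonneg_of_mem_bSet (hu_irr : Irrational u) (hu : u ^ 2 = S * u - N) {δ γ : ℚ}
    (hγ : γ ≠ 0) (hz : (δ * u + γ : ℝ) ∈ BSet {u}) : 0 < γ * N / S ∧ 0 ≤ δ + γ / S := by
  have hS : S ≠ 0 := trace_ne_zero_of_mem_bSet hu_irr hu hγ hz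
  have hN : N ≠ 0 := norm_ne_zero_of_sq_eq hu_irr hu
  obtain ⟨hδ, hγN⟩ := coeff_nonneg_of_mem_bSet hu_irr hu (mul_self_nonneg S) hz
  refine ⟨lt_of_le_of_ne ?_ (by positivity), ?_⟩
  · calc 0 ≤ S * (N * γ) / S ^ 2 := by positivity
      _ = γ * N / S := by field_simp
  · calc 0 ≤ S * (δ * S + γ) / S ^ 2 := by positivity
      _ = δ + γ / S := by field_simp

lemma mul_add_mem_bSet_of_sq_eq (hu0 : 0 < u) (hu : u ^ 2 = S * u - N) {δ γ : ℚ} (hS : S ≠ 0)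
    (hγ : 0 < γ * N / S) (hδ : 0 ≤ δ + γ / S) : (δ * u + γ : ℝ) ∈ BSet {u} := by
  have hu_mem : u ∈ BSet {u} := mem_bSet_of_mem (Set.mem_singleton u) hu0
  have hcomb : (δ * u + γ : ℝ) = (δ + γ / S : ℚ) * u + (γ * N / S : ℚ) * u⁻¹ := by
    push_cast
    field_simp
    linear_combination -γ * hu
  rw [hcomb]
  exact ratCast_mul_add_mem_bSet hδ hu_mem (ratCast_mul_mem_bSet hγ (inv_mem_bSet hu_mem))

theorem mul_add_mem_bSet_iff_of_sq_eq (hu0 : 0 < u) (hu_irr : Irrational u)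
    (hu : u ^ 2 = S * u - N) (δ γ : ℚ) :
    (δ * u + γ : ℝ) ∈ BSet {u} ↔
      (γ = 0 ∧ 0 < δ) ∨ (S ≠ 0 ∧ 0 < γ * N / S ∧ 0 ≤ δ + γ / S) := by
  constructor
  · intro hz
    by_cases hγ : γ = 0
    · have hδu : (0 : ℝ) < δ * u := by simpa [hγ] using pos_of_mem_bSet hz
      exact .inl ⟨hγ, by exact_mod_cast pos_of_mul_pos_left hδu hu0.le⟩
    · exact .inr ⟨trace_ne_zero_of_mem_bSet hu_irr hu hγ hz,
        pos_and_nonneg_of_mem_bSet hu_irr hu hγ hz⟩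
  · rintro (⟨rfl, hδ⟩ | ⟨hS, hγ, hδ⟩)
    · simpa using ratCast_mul_mem_bSet hδ (mem_bSet_of_mem (Set.mem_singleton u) hu0)
    · exact mul_add_mem_bSet_of_sq_eq hu0 hu hS hγ hδ

end Quadratic

/-- Theorem 6 (Freiling–Laczkovich–Rinne): criterion for `v = δu + γ ∈ B(u)`
where `u = α + β√p`. -/
theorem stmt_11 (α β γ δ p : ℚ) (hp : 0 < p) (hirr : Irrational (Real.sqrt p))
    (hβ : β ≠ 0) (u v : ℝ)
    (hu : u = (α : ℝ) + (β : ℝ) * Real.sqrt p) (hupos : 0 < u)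
    (hv : v = (δ : ℝ) * u + (γ : ℝ)) (hvpos : 0 < v) :
    v ∈ BSet {u} ↔
      ((γ = 0 ∧ 0 < δ) ∨
        (α ≠ 0 ∧ 0 < γ * (α ^ 2 - β ^ 2 * p) / α ∧ 0 ≤ δ + γ / (2 * α))) := by
  have hsqrt : Real.sqrt p ^ 2 = p := Real.sq_sqrt (by exact_mod_cast hp.le)
  have hu_irr : Irrational u := hu ▸ (hirr.ratCast_mul hβ).ratCast_add α
  have hu_sq : u ^ 2 = (2 * α : ℚ) * u - (α ^ 2 - β ^ 2 * p : ℚ) := by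
    rw [hu]
    push_cast
    linear_combination (β : ℝ) ^ 2 * hsqrt
  have hhalf : γ * (α ^ 2 - β ^ 2 * p) / (2 * α) = γ * (α ^ 2 - β ^ 2 * p) / α / 2 := by
    rw [mul_comm 2 α, div_mul_eq_div_div]
  have htrace : 2 * α ≠ 0 ↔ α ≠ 0 := mul_ne_zero_iff_left two_ne_zero
  rw [hv, mul_add_mem_bSet_iff_of_sq_eq hupos hu_irr hu_sq, hhalf,
    div_pos_iff_of_pos_right two_pos, htrace]
end

section
/- Let α, β, γ, δ, p be rational numbers with p > 0, √p irrational and β ≠ 0. Let u = α + β√p and v = δ·u + γ, and suppose u > 0 and v > 0. Define M(u) = {e + f√p : e, f ∈ ℚ, e > 0, |f|/e ≤ |β|/α} and N(u) = {e + f√p : e, f ∈ ℚ, f > 0, |e|/f ≤ |α|/β}. Then exactly the following equivalence holds: [(α − β√p > 0 and v ∈ M(u)) or (α − β√p < 0 and v ∈ N(u))] if and only if [(γ = 0 and δ > 0) or (α ≠ 0 and γ·(α² − β²p)/α > 0 and δ + γ/(2α) ≥ 0)]. -/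
/-!
Write `γ = c α`, so that `v = x α + y β √p` with `x = δ + c` and `y = δ`. If `α - β √p > 0`, then
`v ∈ M(u)` says `|y| ≤ x` with `x > 0`; if `α - β √p < 0`, then `v ∈ N(u)` says `|x| ≤ y` with
`y > 0`. Either way the two numbers are equal (`c = 0`) or they are strictly ordered, which fixes
the sign of `c` as that of `α² - β² p = u (α - β √p)`, and their sum `2 δ + c` is nonnegative.
Only `α = 0` has to be treated separately; it can occur in the second case alone.
-/

section Slopes

variable {K : Type*}

theorem pos_and_abs_le_iff [AddCommGroup K] [LinearOrder K] [IsOrderedAddMonoid K] {x y : K} :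
    0 < x ∧ |y| ≤ x ↔ (y = x ∧ 0 < x) ∨ (y < x ∧ 0 ≤ x + y) := by
  rw [abs_le, neg_le_iff_add_nonneg']
  constructor
  · rintro ⟨hx, hsum, hle⟩
    exact hle.eq_or_lt.imp (⟨·, hx⟩) (⟨·, hsum⟩)
  · rintro (⟨rfl, hy⟩ | ⟨hlt, hsum⟩)
    · exact ⟨hy, (add_pos hy hy).le, le_rfl⟩
    · have hx : 0 < x := by
        by_contra! hx
        exact (add_neg_of_nonpos_of_neg hx (hlt.trans_le hx)).not_ge hsum
      exact ⟨hx, hsum, hlt.le⟩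

variable [Field K] [LinearOrder K] [IsStrictOrderedRing K] {a b x y : K}

theorem pos_and_abs_mul_div_mul_le_iff (ha : 0 < a) (hb : b ≠ 0) :
    0 < x * a ∧ |y * b| / (x * a) ≤ |b| / a ↔ 0 < x ∧ |y| ≤ x := by
  rw [mul_pos_iff_of_pos_right ha]
  refine and_congr_right fun hx ↦ ?_
  have hquot : |y * b| / (x * a) = |y| / x * (|b| / a) := by rw [abs_mul, mul_div_mul_comm]
  rw [hquot, mul_le_iff_le_one_left (div_pos (abs_pos.mpr hb) ha), div_le_one hx]

variable {α β γ δ D : K}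

theorem pos_and_abs_div_le_abs_div_iff_of_pos (hα : 0 < α) (hβ : β ≠ 0) (hD : 0 < D) :
    0 < δ * α + γ ∧ |δ * β| / (δ * α + γ) ≤ |β| / α ↔
      (γ = 0 ∧ 0 < δ) ∨ (α ≠ 0 ∧ 0 < γ * D / α ∧ 0 ≤ δ + γ / (2 * α)) := by
  obtain ⟨c, rfl⟩ : ∃ c, γ = c * α := ⟨γ / α, (div_mul_cancel₀ γ hα.ne').symm⟩
  have hsign : 0 < c * α * D / α ↔ 0 < c := by
    rw [mul_right_comm, mul_div_cancel_right₀ _ hα.ne', mul_pos_iff_of_pos_right hD]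
  have hsum : 2 * (δ + c * α / (2 * α)) = δ + c + δ := by field_simp; ring
  rw [← add_mul, pos_and_abs_mul_div_mul_le_iff hα hβ, pos_and_abs_le_iff, hsign, ← hsum,
    mul_nonneg_iff_of_pos_left two_pos, left_eq_add, lt_add_iff_pos_right,
    mul_eq_zero_iff_right hα.ne']
  refine or_congr (and_congr_right fun hc ↦ ?_) (and_iff_right hα.ne').symm
  rw [hc, add_zero]

theorem pos_and_abs_div_le_abs_div_iff_of_neg (hβ : 0 < β) (hD : D < 0) :
    0 < δ * β ∧ |δ * α + γ| / (δ * β) ≤ |α| / β ↔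
      (γ = 0 ∧ 0 < δ) ∨ (α ≠ 0 ∧ 0 < γ * D / α ∧ 0 ≤ δ + γ / (2 * α)) := by
  rcases eq_or_ne α 0 with rfl | hα
  · have habs (hδβ : 0 < δ * β) : |γ| / (δ * β) ≤ 0 ↔ γ = 0 := by
      rw [div_le_iff₀ hδβ, zero_mul, abs_nonpos_iff]
    simp only [mul_zero, zero_add, abs_zero, zero_div, ne_eq, not_true, false_and, or_false]
    rw [and_congr_right habs, mul_pos_iff_of_pos_right hβ, and_comm]
  obtain ⟨c, rfl⟩ : ∃ c, γ = c * α := ⟨γ / α, (div_mul_cancel₀ γ hα).symm⟩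
  have hsign : 0 < c * α * D / α ↔ c < 0 := by
    rw [mul_right_comm, mul_div_cancel_right₀ _ hα, ← neg_mul_neg,
      mul_pos_iff_of_pos_right (neg_pos.mpr hD), neg_pos]
  have hsum : 2 * (δ + c * α / (2 * α)) = δ + (δ + c) := by field_simp; ring
  rw [← add_mul, pos_and_abs_mul_div_mul_le_iff hβ hα, pos_and_abs_le_iff, hsign, ← hsum,
    mul_nonneg_iff_of_pos_left two_pos, add_eq_left, add_lt_iff_neg_left,
    mul_eq_zero_iff_right hα, and_iff_right hα]

end Slopes

section QuadraticExtension

variable {K L : Type*} [Field K] [CommRing L] [Algebra K L]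

theorem algebraMap_add_algebraMap_mul_inj {s : L} (hs : s ∉ Set.range (algebraMap K L))
    {a b e f : K} :
    algebraMap K L a + algebraMap K L b * s = algebraMap K L e + algebraMap K L f * s ↔
      a = e ∧ b = f := by
  have : Nontrivial L := ⟨s, algebraMap K L 0, fun h ↦ hs ⟨0, h.symm⟩⟩
  have hind : LinearIndependent K ![1, s] :=
    (LinearIndependent.pair_iff' one_ne_zero).mpr fun c hc ↦
      hs ⟨c, (Algebra.algebraMap_eq_smul_one c).trans hc⟩
  refine ⟨fun h ↦ hind.eq_of_pair ?_, by rintro ⟨rfl, rfl⟩; rfl⟩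
  simpa only [Algebra.smul_def, mul_one] using h

theorem algebraMap_sub_algebraMap_mul_ne_zero {s : L} (hs : s ∉ Set.range (algebraMap K L))
    {a b : K} (hb : b ≠ 0) : algebraMap K L a - algebraMap K L b * s ≠ 0 := by
  intro h
  refine hb ((algebraMap_add_algebraMap_mul_inj hs (a := 0) (e := a) (f := 0)).mp ?_).2
  simpa using (sub_eq_zero.mp h).symm

theorem algebraMap_sq_sub_sq_mul {s : L} {α β p : K} (hsp : s ^ 2 = algebraMap K L p) :
    algebraMap K L (α ^ 2 - β ^ 2 * p) =
      (algebraMap K L α + algebraMap K L β * s) * (algebraMap K L α - algebraMap K L β * s) := by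
  simp only [map_sub, map_mul, map_pow, ← hsp]
  ring

variable [LinearOrder K]

/-- The set `M(u)` for `u = α + β s`, where `s` plays the role of `√p`. Its arguments are the
coordinates `α`, `β` of `u`, as it depends on `u` through them alone; the bound on `|f| / e` has its
intended meaning for `0 < α`. -/
def horizontalCone (s : L) (α β : K) : Set L :=
  {v | ∃ e f : K, v = algebraMap K L e + algebraMap K L f * s ∧ 0 < e ∧ |f| / e ≤ |β| / α}

/-- The set `N(u)` for `u = α + β s`: the counterpart of `horizontalCone` with the two
coordinates interchanged, its bound having the intended meaning for `0 < β`. -/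
def verticalCone (s : L) (α β : K) : Set L :=
  {v | ∃ e f : K, v = algebraMap K L e + algebraMap K L f * s ∧ 0 < f ∧ |e| / f ≤ |α| / β}

variable {s : L} {α β γ δ p : K}

theorem mem_horizontalCone_iff (hs : s ∉ Set.range (algebraMap K L)) {e f : K} :
    algebraMap K L e + algebraMap K L f * s ∈ horizontalCone s α β ↔
      0 < e ∧ |f| / e ≤ |β| / α := by
  simp [horizontalCone, algebraMap_add_algebraMap_mul_inj hs, ← and_assoc]

theorem mem_verticalCone_iff (hs : s ∉ Set.range (algebraMap K L)) {e f : K} :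
    algebraMap K L e + algebraMap K L f * s ∈ verticalCone s α β ↔
      0 < f ∧ |e| / f ≤ |α| / β := by
  simp [verticalCone, algebraMap_add_algebraMap_mul_inj hs, ← and_assoc]

variable [IsStrictOrderedRing K] [LinearOrder L] [IsStrictOrderedRing L] [IsStrictOrderedModule K L]

theorem stmt_12_general (hsp : s ^ 2 = algebraMap K L p) (hspos : 0 < s)
    (hs : s ∉ Set.range (algebraMap K L)) (hβ : β ≠ 0) {u v : L}
    (hu : u = algebraMap K L α + algebraMap K L β * s) (hupos : 0 < u)
    (hv : v = algebraMap K L δ * u + algebraMap K L γ) :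
    (0 < algebraMap K L α - algebraMap K L β * s ∧ v ∈ horizontalCone s α β) ∨
      (algebraMap K L α - algebraMap K L β * s < 0 ∧ v ∈ verticalCone s α β) ↔
    (γ = 0 ∧ 0 < δ) ∨ (α ≠ 0 ∧ 0 < γ * (α ^ 2 - β ^ 2 * p) / α ∧ 0 ≤ δ + γ / (2 * α)) := by
  have hcoord : v = algebraMap K L (δ * α + γ) + algebraMap K L (δ * β) * s := by
    rw [hv, hu]; simp only [map_add, map_mul]; ring
  have hnorm := algebraMap_sq_sub_sq_mul (α := α) (β := β) hsp
  rw [← hu] at hnorm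
  rw [hcoord, mem_horizontalCone_iff hs, mem_verticalCone_iff hs]
  rcases (algebraMap_sub_algebraMap_mul_ne_zero hs (a := α) hβ).lt_or_gt with hneg | hpos
  · have hβpos : 0 < β := by
      have : 0 < algebraMap K L β * s := by linarith
      rwa [mul_pos_iff_of_pos_right hspos, ← map_zero (algebraMap K L),
        algebraMap_lt_algebraMap] at this
    have hD : α ^ 2 - β ^ 2 * p < 0 := by
      rw [← algebraMap_lt_algebraMap (β := L), hnorm, map_zero]
      exact mul_neg_of_pos_of_neg hupos hneg
    simp only [hneg, hneg.not_gt, false_and, true_and, false_or]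
    exact pos_and_abs_div_le_abs_div_iff_of_neg hβpos hD
  · have hαpos : 0 < α := by
      rw [← algebraMap_lt_algebraMap (β := L), map_zero]
      linarith
    have hD : 0 < α ^ 2 - β ^ 2 * p := by
      rw [← algebraMap_lt_algebraMap (β := L), hnorm, map_zero]
      exact mul_pos hupos hpos
    simp only [hpos, hpos.not_gt, false_and, true_and, or_false]
    exact pos_and_abs_div_le_abs_div_iff_of_pos hαpos hβ hD

end QuadraticExtension

/-- Equivalence of the conditions of Theorem 6 with membership in `M(u)` or
`N(u)`: purely algebraic statement. -/
theorem stmt_12 (α β γ δ p : ℚ) (hp : 0 < p) (hirr : Irrational (Real.sqrt p))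
    (hβ : β ≠ 0) (u v : ℝ)
    (hu : u = (α : ℝ) + (β : ℝ) * Real.sqrt p) (hupos : 0 < u)
    (hv : v = (δ : ℝ) * u + (γ : ℝ)) (hvpos : 0 < v) :
    ((0 < (α : ℝ) - (β : ℝ) * Real.sqrt p ∧
        ∃ e f : ℚ, v = (e : ℝ) + (f : ℝ) * Real.sqrt p ∧ 0 < e ∧ |f| / e ≤ |β| / α) ∨
     ((α : ℝ) - (β : ℝ) * Real.sqrt p < 0 ∧
        ∃ e f : ℚ, v = (e : ℝ) + (f : ℝ) * Real.sqrt p ∧ 0 < f ∧ |e| / f ≤ |α| / β)) ↔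
      ((γ = 0 ∧ 0 < δ) ∨
        (α ≠ 0 ∧ 0 < γ * (α ^ 2 - β ^ 2 * p) / α ∧ 0 ≤ δ + γ / (2 * α))) := by
  have hp' : (0 : ℝ) < p := by exact_mod_cast hp
  exact stmt_12_general (s := √(p : ℝ)) (Real.sq_sqrt hp'.le) (Real.sqrt_pos.mpr hp') hirr hβ
    hu hupos hv
end

section
/- Let p be a positive rational number with √p irrational, and let a, b, e, f be rational numbers with b ≠ 0, a + b√p > 0, and e + f√p > 0. Suppose that either (a − b√p > 0 and a·|f| > e·|b|) or (a − b√p < 0 and b·|e| > f·|a|). Then (a² − p·b²)·(e²·b² − f²·a²) < 0. -/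
/-!
Absorb `√p` into the second coordinates: put `B = b√p` and `F = f√p`, so that `a + B` and `e + F`
are positive. The first alternative reads `|B| < a` and `e|B| < a|F|`, and the second one is its
image under the exchange `(a, e) ↔ (B, F)`. Moreover `p` times the discriminant is
`(a² - B²)(e²B² - F²a²)`, which is invariant under this exchange, so only the first alternative has
to be treated. There the first factor is positive, and the second one is negative: this is immediate
for `e ≥ 0`, while a negative `e` satisfies `|e| < |F|`.
-/

section

variable {R : Type*} [CommRing R] [LinearOrder R] [IsStrictOrderedRing R] {a b e f : R}

lemma abs_mul_lt_abs_mul_of_add_pos (hab : |b| < a) (hef : 0 < e + f) (h : e * |b| < a * |f|) :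
    |e * b| < |f * a| := by
  have ha : 0 < a := (abs_nonneg b).trans_lt hab
  rw [abs_mul, abs_mul, abs_of_pos ha]
  rcases le_or_gt 0 e with he | he
  · rwa [abs_of_nonneg he, mul_comm |f|]
  · have hf : 0 < f := by linarith
    have hef' : |e| ≤ |f| := by
      rw [abs_of_neg he, abs_of_pos hf]
      linarith
    calc |e| * |b| ≤ |f| * |b| := by gcongr
      _ < |f| * a := by gcongr

lemma sq_sub_sq_mul_neg_of_add_pos (hab : |b| < a) (hef : 0 < e + f) (h : e * |b| < a * |f|) :
    (a ^ 2 - b ^ 2) * (e ^ 2 * b ^ 2 - f ^ 2 * a ^ 2) < 0 := by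
  have hsq : b ^ 2 < a ^ 2 := sq_lt_sq.2 (hab.trans_le (le_abs_self a))
  have hmul : (e * b) ^ 2 < (f * a) ^ 2 := sq_lt_sq.2 (abs_mul_lt_abs_mul_of_add_pos hab hef h)
  rw [mul_pow, mul_pow] at hmul
  exact mul_neg_of_pos_of_neg (sub_pos.2 hsq) (sub_neg.2 hmul)

theorem stmt_13_general {p s : R} (hs : 0 < s) (hp : s ^ 2 = p)
    (hx : 0 < a + b * s) (hz : 0 < e + f * s)
    (hcase : (0 < a - b * s ∧ e * |b| < a * |f|) ∨ (a - b * s < 0 ∧ f * |a| < b * |e|)) :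
    (a ^ 2 - p * b ^ 2) * (e ^ 2 * b ^ 2 - f ^ 2 * a ^ 2) < 0 := by
  have hscaled : (a ^ 2 - (b * s) ^ 2) * (e ^ 2 * (b * s) ^ 2 - (f * s) ^ 2 * a ^ 2) < 0 := by
    rcases hcase with ⟨hconj, h⟩ | ⟨hconj, h⟩
    · have hab : |b * s| < a := abs_lt.2 ⟨by linarith, by linarith⟩
      have h' : e * |b * s| < a * |f * s| := by
        rw [abs_mul, abs_mul, abs_of_pos hs, ← mul_assoc, ← mul_assoc]
        gcongr
      exact sq_sub_sq_mul_neg_of_add_pos hab hz h'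
    · have hba : |a| < b * s := abs_lt.2 ⟨by linarith, by linarith⟩
      have h' : f * s * |a| < b * s * |e| := by
        rw [mul_right_comm f, mul_right_comm b]
        gcongr
      have hswap := sq_sub_sq_mul_neg_of_add_pos hba (add_comm e (f * s) ▸ hz) h'
      rwa [← neg_mul_neg, neg_sub, neg_sub]
  have hfactor : s ^ 2 * ((a ^ 2 - p * b ^ 2) * (e ^ 2 * b ^ 2 - f ^ 2 * a ^ 2)) < 0 := by
    convert hscaled using 1
    rw [← hp]
    ring
  exact neg_of_mul_neg_right hfactor (sq_nonneg s)

end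

/-- The discriminant computation: under the stated sign hypotheses, the
discriminant `(a² - p·b²)·(e²·b² - f²·a²)` is negative. -/
theorem stmt_13 (p : ℚ) (hp : 0 < p) (hirr : Irrational (Real.sqrt p))
    (a b e f : ℚ) (hb : b ≠ 0)
    (hx : (0 : ℝ) < (a : ℝ) + (b : ℝ) * Real.sqrt p)
    (hz : (0 : ℝ) < (e : ℝ) + (f : ℝ) * Real.sqrt p)
    (hcase : (0 < (a : ℝ) - (b : ℝ) * Real.sqrt p ∧ e * |b| < a * |f|) ∨
             ((a : ℝ) - (b : ℝ) * Real.sqrt p < 0 ∧ f * |a| < b * |e|)) :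
    (a ^ 2 - p * b ^ 2) * (e ^ 2 * b ^ 2 - f ^ 2 * a ^ 2) < 0 := by
  have hp' : (0 : ℝ) < p := by exact_mod_cast hp
  exact_mod_cast stmt_13_general (Real.sqrt_pos.2 hp') (Real.sq_sqrt hp'.le) hx hz
    (by exact_mod_cast hcase)
end

section
/- Let p be a positive rational number with √p irrational, let a₁, b₁ be rational numbers with x₁ = a₁ + b₁√p > 0 and a₁ − b₁√p > 0 (so a₁ > 0). Let z = e + f√p with e, f ∈ ℚ and z > 0. If z ∉ M(x₁), i.e., it is not the case that (e > 0 and |f|/e ≤ |b₁|/a₁), then z ∉ B(x₁): no rectangle with side ratio z can be tiled by rectangles with side ratio x₁. -/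
/-!
Suppose an axis-parallel `W × H` rectangle is tiled by `wᵢ × hᵢ` rectangles. For any additive maps
`f`, `g` on `ℝ`, however discontinuous, `f w * g h` behaves like an area:
`∑ f wᵢ * g hᵢ = f W * g H`. Take for one of the maps an additive extension `S` to `ℝ` of the
conjugation `x ↦ x'` of `ℚ(√p)`, with `S H = H`, and for the other the identity. If the tiles have
ratio `x` with `x, x' > 0` and `l` bounds both `x / x'` and `x' / x`, then by AM-GM the form
`w * h + l * S w * S h - 2 * w * S h` is nonnegative on each tile, hence on the whole rectangle. For
`W = z * H` this says `z ≤ l * z'`; exchanging the identity and `S` gives `z' ≤ l * z`. With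
`l = (a + |b|√p) / (a - |b|√p)` the two inequalities say exactly that `|f| * a ≤ |b| * e`.
-/

open Set Filter Topology

section Intervals

variable {α β K ι : Type*} [LinearOrder α] [LinearOrder β] [Field K]

theorem linearIndependent_indicator_Ici :
    LinearIndependent K fun a : α => (Ici a).indicator (1 : α → K) := by
  rw [linearIndependent_iff]
  intro c hc
  by_contra hne
  have hsupp : c.support.Nonempty := Finsupp.support_nonempty_iff.mpr hne
  set a₀ := c.support.min' hsupp
  have ha₀ : a₀ ∈ c.support := c.support.min'_mem hsupp
  have heval : ∑ a ∈ c.support, c a * (Ici a).indicator (1 : α → K) a₀ = 0 := by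
    simpa [Finsupp.linearCombination_apply, Finsupp.sum] using congrFun hc a₀
  rw [Finset.sum_eq_single_of_mem a₀ ha₀] at heval
  · exact Finsupp.mem_support_iff.mp ha₀ (by simpa using heval)
  · intro a ha hne
    have hlt : a₀ < a := (c.support.min'_le a ha).lt_of_ne hne.symm
    simp [hlt]

-- A finitely additive Stieltjes integral on all functions `α → K`, for an arbitrary integrator `F`.
theorem exists_linearMap_indicator_Ico {V : Type*} [AddCommGroup V] [Module K V] (F : α → V) :
    ∃ L : (α → K) →ₗ[K] V, ∀ a b, a ≤ b → L ((Ico a b).indicator 1) = F b - F a := by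
  obtain ⟨coeffs, hcoeffs⟩ := LinearMap.exists_leftInverse_of_injective _
    (LinearMap.ker_eq_bot.mpr (linearIndependent_indicator_Ici (α := α) (K := K)))
  have hray (a : α) : coeffs ((Ici a).indicator 1) = Finsupp.single a 1 := by
    simpa using LinearMap.congr_fun hcoeffs (Finsupp.single a 1)
  refine ⟨-(Finsupp.linearCombination K F ∘ₗ coeffs), fun a b hab => ?_⟩
  rw [← Ici_sdiff_Ici, indicator_sdiff (Ici_subset_Ici.mpr hab)]
  simp [hray]

theorem sum_mul_sub_of_sum_mul_indicator_Ico [Fintype ι] {a b : ι → α} {A B : α} {k : ι → K}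
    {k₀ : K} (hab : ∀ i, a i ≤ b i) (hAB : A ≤ B)
    (h : ∀ x, ∑ i, k i * (Ico (a i) (b i)).indicator 1 x = k₀ * (Ico A B).indicator 1 x)
    (F : α → K) : ∑ i, k i * (F (b i) - F (a i)) = k₀ * (F B - F A) := by
  obtain ⟨L, hL⟩ := exists_linearMap_indicator_Ico (K := K) F
  have hfun : ∑ i, k i • (Ico (a i) (b i)).indicator (1 : α → K) = k₀ • (Ico A B).indicator 1 := by
    ext x
    simpa using h x
  simpa [hL, hab, hAB] using congrArg L hfun

theorem sum_sub_mul_sub_of_iUnion_Ico_prod_Ico [Fintype ι] {a b : ι → α} {c d : ι → β}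
    {A B : α} {C D : β} (hab : ∀ i, a i ≤ b i) (hcd : ∀ i, c i ≤ d i) (hAB : A ≤ B) (hCD : C ≤ D)
    (hcover : ⋃ i, Ico (a i) (b i) ×ˢ Ico (c i) (d i) = Ico A B ×ˢ Ico C D)
    (hdisj : Pairwise fun i j =>
      Disjoint (Ico (a i) (b i) ×ˢ Ico (c i) (d i)) (Ico (a j) (b j) ×ˢ Ico (c j) (d j)))
    (F : α → K) (G : β → K) :
    ∑ i, (F (b i) - F (a i)) * (G (d i) - G (c i)) = (F B - F A) * (G D - G C) := by
  have hpoint (x : α) (y : β) :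
      ∑ i, (Ico (c i) (d i)).indicator 1 y * (Ico (a i) (b i)).indicator (1 : α → K) x =
        (Ico C D).indicator 1 y * (Ico A B).indicator 1 x := by
    have h := Finset.indicator_biUnion_apply (f := (1 : α × β → K)) Finset.univ _
      (fun i _ j _ hij => hdisj hij) (x, y)
    simp only [Finset.mem_univ, iUnion_true, hcover, indicator_prod_one] at h
    simpa only [mul_comm] using h.symm
  refine sum_mul_sub_of_sum_mul_indicator_Ico hcd hCD (fun y => ?_) G
  simpa only [mul_comm] using
    sum_mul_sub_of_sum_mul_indicator_Ico hab hAB (fun x => hpoint x y) F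

theorem disjoint_Ico_prod_Ico_of_Ioo_prod_Ioo [DenselyOrdered α] [DenselyOrdered β]
    {a b a' b' : α} {c d c' d' : β}
    (h : Disjoint (Ioo a b ×ˢ Ioo c d) (Ioo a' b' ×ˢ Ioo c' d')) :
    Disjoint (Ico a b ×ˢ Ico c d) (Ico a' b' ×ˢ Ico c' d') := by
  simpa only [Set.disjoint_prod, Ioo_disjoint_Ioo, Ico_disjoint_Ico] using h

section OrderTopology

variable [TopologicalSpace α] [OrderClosedTopology α] [TopologicalSpace β] [OrderClosedTopology β]

theorem eventually_nhdsGT_mem_Icc_iff (a b x : α) :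
    ∀ᶠ s in 𝓝[>] x, s ∈ Icc a b ↔ x ∈ Ico a b := by
  rcases lt_or_ge x a with hxa | hax
  · filter_upwards [nhdsWithin_le_nhds (Iio_mem_nhds hxa)] with s hs
    simp [not_le.mpr hxa, not_le.mpr hs]
  rcases lt_or_ge x b with hxb | hbx
  · filter_upwards [Ioo_mem_nhdsGT hxb] with s hs
    simp [hax, hxb, hax.trans hs.1.le, hs.2.le]
  · filter_upwards [self_mem_nhdsWithin] with s hs
    simp [not_lt.mpr hbx, not_le.mpr (hbx.trans_lt hs)]

theorem eventually_nhdsGT_prod_mem_Icc_prod_Icc_iff (a b x : α) (c d y : β) :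
    ∀ᶠ s in 𝓝[>] x ×ˢ 𝓝[>] y, s ∈ Icc a b ×ˢ Icc c d ↔ (x, y) ∈ Ico a b ×ˢ Ico c d := by
  filter_upwards [(eventually_nhdsGT_mem_Icc_iff a b x).prod_mk
    (eventually_nhdsGT_mem_Icc_iff c d y)] with s hs
  exact and_congr hs.1 hs.2

theorem iUnion_Ico_prod_Ico_of_iUnion_Icc_prod_Icc [∀ x : α, (𝓝[>] x).NeBot]
    [∀ y : β, (𝓝[>] y).NeBot] [Finite ι] {a b : ι → α} {c d : ι → β} {A B : α} {C D : β}
    (hcover : ⋃ i, Icc (a i) (b i) ×ˢ Icc (c i) (d i) = Icc A B ×ˢ Icc C D) :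
    ⋃ i, Ico (a i) (b i) ×ˢ Ico (c i) (d i) = Ico A B ×ˢ Ico C D := by
  ext ⟨x, y⟩
  -- Just above and to the right of `(x, y)`, closed and half-open rectangles look the same.
  obtain ⟨s, htiles, hrect⟩ := ((eventually_all.mpr fun i =>
    eventually_nhdsGT_prod_mem_Icc_prod_Icc_iff (a i) (b i) x (c i) (d i) y).and
    (eventually_nhdsGT_prod_mem_Icc_prod_Icc_iff A B x C D y)).exists
  rw [← hrect, ← hcover]
  simp only [mem_iUnion, htiles]

end OrderTopology

end Intervals

theorem sum_map_mul_map_of_tiling {ι : Type*} [Fintype ι] {R : Set (ℝ × ℝ)} {W H : ℝ}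
    {T : ι → Set (ℝ × ℝ)} {w h : ι → ℝ} (hR : IsRect R W H)
    (hT : ∀ i, IsRect (T i) (w i) (h i)) (hcover : ⋃ i, T i = R)
    (hdisj : Pairwise fun i j => Disjoint (interior (T i)) (interior (T j))) (f g : ℝ →+ ℝ) :
    ∑ i, f (w i) * g (h i) = f W * g H := by
  obtain ⟨hW, hH, X, Y, rfl⟩ := hR
  choose hw hh x y hTeq using hT
  obtain rfl : T = fun i => Icc (x i) (x i + w i) ×ˢ Icc (y i) (y i + h i) := funext hTeq
  simp only [interior_prod_eq, interior_Icc] at hdisj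
  simpa only [map_add, add_sub_cancel_left] using sum_sub_mul_sub_of_iUnion_Ico_prod_Ico
    (fun i => le_add_of_nonneg_right (hw i).le) (fun i => le_add_of_nonneg_right (hh i).le)
    (le_add_of_nonneg_right hW.le) (le_add_of_nonneg_right hH.le)
    (iUnion_Ico_prod_Ico_of_iUnion_Icc_prod_Icc hcover)
    (fun i j hij => disjoint_Ico_prod_Ico_of_Ioo_prod_Ioo (hdisj hij)) f g

theorem pos_of_mem_BSet {ratios : Set ℝ} {z : ℝ} (hz : z ∈ BSet ratios) : 0 < z := by
  obtain ⟨W, H, R, ⟨hW, hH, -⟩, rfl | rfl, -⟩ := hz <;> positivity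

theorem exists_sides_of_mem_BSet {ratios : Set ℝ} {z : ℝ} (hz : z ∈ BSet ratios) :
    ∃ (H : ℝ) (m : ℕ) (w h : Fin m → ℝ), 0 < H ∧
      (∀ i, (∃ r ∈ ratios, w i = r * h i) ∨ ∃ r ∈ ratios, h i = r * w i) ∧
      ∀ f g : ℝ →+ ℝ, ∑ i, f (w i) * g (h i) = f (z * H) * g H := by
  obtain ⟨W, H, R, hR, hzWH, m, T, w, h, hT, hratio, hcover, hdisj⟩ := hz
  have hsum := sum_map_mul_map_of_tiling hR hT hcover hdisj
  have hside (i) : (∃ r ∈ ratios, w i = r * h i) ∨ ∃ r ∈ ratios, h i = r * w i :=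
    (hratio i).imp (⟨_, ·, (div_mul_cancel₀ _ (hT i).2.1.ne').symm⟩)
      (⟨_, ·, (div_mul_cancel₀ _ (hT i).1.ne').symm⟩)
  rcases hzWH with rfl | rfl
  · refine ⟨H, m, w, h, hR.2.1, hside, ?_⟩
    simpa only [div_mul_cancel₀ W hR.2.1.ne'] using hsum
  · refine ⟨W, m, h, w, hR.1, fun i => (hside i).symm, fun f g => ?_⟩
    simpa only [div_mul_cancel₀ H hR.1.ne', mul_comm] using hsum g f

/-- Multiplication by `r` acts on the values of `A` and of `B` by positive factors `α` and `β`
whose quotient lies between `l⁻¹` and `l`. -/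
def ScalesComparably (A B : ℝ →+ ℝ) (l r : ℝ) : Prop :=
  ∃ α β : ℝ, 0 < α ∧ 0 < β ∧ α ≤ l * β ∧ β ≤ l * α ∧
    (∀ t, A (r * t) = α * A t) ∧ ∀ t, B (r * t) = β * B t

theorem ScalesComparably.symm {A B : ℝ →+ ℝ} {l r : ℝ} (h : ScalesComparably A B l r) :
    ScalesComparably B A l r := by
  obtain ⟨α, β, hα, hβ, hαβ, hβα, hA, hB⟩ := h
  exact ⟨β, α, hβ, hα, hβα, hαβ, hB, hA⟩

theorem two_mul_mul_le_add_of_sq_le_mul {α γ δ : ℝ} (hα : 0 < α) (h : γ ^ 2 ≤ α * δ) (x y : ℝ) :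
    2 * (γ * x * y) ≤ α * x ^ 2 + δ * y ^ 2 := by
  refine le_of_mul_le_mul_left ?_ hα
  linarith [sq_nonneg (α * x - γ * y), mul_le_mul_of_nonneg_right h (sq_nonneg y)]

theorem ScalesComparably.two_mul_mul_le {A B : ℝ →+ ℝ} {l r w h : ℝ}
    (hr : ScalesComparably A B l r) (hside : w = r * h ∨ h = r * w) :
    2 * (A w * B h) ≤ A w * A h + l * (B w * B h) := by
  obtain ⟨α, β, hα, hβ, hαβ, hβα, hA, hB⟩ := hr
  rcases hside with rfl | rfl
  · have hsq : α ^ 2 ≤ α * (l * β) := by nlinarith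
    rw [hA, hB]
    linarith [two_mul_mul_le_add_of_sq_le_mul hα hsq (A h) (B h)]
  · have hsq : β ^ 2 ≤ α * (l * β) := by nlinarith
    rw [hA, hB]
    linarith [two_mul_mul_le_add_of_sq_le_mul hα hsq (A w) (B w)]

theorem two_mul_mul_le_of_sum_map_mul_map {ι : Type*} [Fintype ι] {A B : ℝ →+ ℝ} {l W H : ℝ}
    {ratios : Set ℝ} {w h : ι → ℝ} (hratios : ∀ r ∈ ratios, ScalesComparably A B l r)
    (hside : ∀ i, (∃ r ∈ ratios, w i = r * h i) ∨ ∃ r ∈ ratios, h i = r * w i)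
    (hsum : ∀ f g : ℝ →+ ℝ, ∑ i, f (w i) * g (h i) = f W * g H) :
    2 * (A W * B H) ≤ A W * A H + l * (B W * B H) := by
  rw [← hsum A B, ← hsum A A, ← hsum B B, Finset.mul_sum, Finset.mul_sum, ← Finset.sum_add_distrib]
  refine Finset.sum_le_sum fun i _ => ?_
  rcases hside i with ⟨r, hr, hi⟩ | ⟨r, hr, hi⟩
  · exact (hratios r hr).two_mul_mul_le (.inl hi)
  · exact (hratios r hr).two_mul_mul_le (.inr hi)

section Conjugation

open IntermediateField

theorem exists_algHom_adjoin_simple_neg {F E : Type*} [Field F] [Field E] [Algebra F E] {p : F}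
    {q : E} (hq : q ∉ range (algebraMap F E)) (hqp : q ^ 2 = algebraMap F E p) :
    ∃ σ : F⟮q⟯ →ₐ[F] E, σ (AdjoinSimple.gen F q) = -q := by
  have hroot : Polynomial.aeval q (Polynomial.X ^ 2 - Polynomial.C p) = 0 := by simp [hqp]
  have hmonic : (Polynomial.X ^ 2 - Polynomial.C p).Monic :=
    Polynomial.monic_X_pow_sub_C p two_ne_zero
  have hirr : Irreducible (Polynomial.X ^ 2 - Polynomial.C p) := by
    refine X_pow_sub_C_irreducible_of_prime Nat.prime_two fun r hr => hq ?_
    have hsq : q ^ 2 = algebraMap F E r ^ 2 := by rw [hqp, ← hr, map_pow]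
    rcases sq_eq_sq_iff_eq_or_eq_neg.mp hsq with h | h
    · exact ⟨r, h.symm⟩
    · exact ⟨-r, by rw [map_neg, h]⟩
  have hneg : Polynomial.aeval (-q) (minpoly F q) = 0 := by
    rw [← minpoly.eq_of_irreducible_of_monic hirr hroot hmonic]
    simp [hqp]
  have hint : IsIntegral F q := ⟨_, hmonic, hroot⟩
  exact ⟨(algHomAdjoinIntegralEquiv F hint).symm
    ⟨-q, Polynomial.mem_aroots.mpr ⟨minpoly.ne_zero hint, hneg⟩⟩,
    algHomAdjoinIntegralEquiv_symm_apply_gen F hint _⟩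

theorem exists_semilinearMap_apply_eq {K L V M : Type*} [Field K] [Semiring L] [AddCommGroup V]
    [Module K V] [AddCommMonoid M] [Module L M] (σ : K →+* L) {u : V} (hu : u ≠ 0) (v : M) :
    ∃ S : V →ₛₗ[σ] M, S u = v := by
  obtain ⟨φ, hφ⟩ := Module.Projective.exists_dual_eq_one K hu
  refine ⟨⟨⟨fun t => σ (φ t) • v, fun s t => ?_⟩, fun k t => ?_⟩, ?_⟩
  · simp [add_smul]
  · simp [mul_smul]
  · simp [hφ]

theorem exists_addMonoidHom_conj {p : ℚ} {q : ℝ} (hq : Irrational q) (hqp : q ^ 2 = p) {u : ℝ}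
    (hu : u ≠ 0) : ∃ S : ℝ →+ ℝ, S u = u ∧
      ∀ (a b : ℚ) (t : ℝ), S ((a + b * q) * t) = (a - b * q) * S t := by
  obtain ⟨σ, hσ⟩ := exists_algHom_adjoin_simple_neg (F := ℚ) hq hqp
  obtain ⟨S, hS⟩ := exists_semilinearMap_apply_eq (σ : ℚ⟮q⟯ →+* ℝ) hu u
  refine ⟨S.toAddMonoidHom, hS, fun a b t => ?_⟩
  have h := S.map_smulₛₗ (a + b * AdjoinSimple.gen ℚ q) t
  simpa [hσ, Algebra.smul_def, sub_eq_add_neg] using h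

end Conjugation

/-- The largest value of `(a + b * q) / (a - b * q)` for `a > 0` and `|b| ≤ μ * a`, given
`0 < q`, `0 ≤ μ` and `μ * q < 1`. It bounds how much conjugation distorts a ratio of slope at
most `μ`. -/
noncomputable def maxConjRatio (μ q : ℝ) : ℝ := (1 + μ * q) / (1 - μ * q)

section Slope

variable {μ q : ℝ}

theorem add_mul_le_maxConjRatio_mul_iff (hq : 0 < q) (hμ : μ * q < 1) {a b : ℝ} :
    a + b * q ≤ maxConjRatio μ q * (a - b * q) ↔ b ≤ μ * a := by
  rw [maxConjRatio, div_mul_eq_mul_div, le_div_iff₀ (by linarith),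
    ← mul_le_mul_iff_left₀ (b := b) hq]
  constructor <;> intro h <;> linarith

theorem sub_mul_le_maxConjRatio_mul_iff (hq : 0 < q) (hμ : μ * q < 1) {a b : ℝ} :
    a - b * q ≤ maxConjRatio μ q * (a + b * q) ↔ -b ≤ μ * a := by
  simpa [← sub_eq_add_neg] using add_mul_le_maxConjRatio_mul_iff hq hμ (a := a) (b := -b)

theorem abs_mul_lt_of_abs_le_mul (hq : 0 < q) (hμ : μ * q < 1) {a b : ℝ} (ha : 0 < a)
    (hb : |b| ≤ μ * a) : |b * q| < a := by
  rw [abs_mul, abs_of_pos hq]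
  calc |b| * q ≤ μ * q * a := by linarith [mul_le_mul_of_nonneg_right hb hq.le]
    _ < a := mul_lt_of_lt_one_left ha hμ

theorem pos_and_abs_div_mul_lt_one {a b : ℝ} (hq : 0 ≤ q) (h : 0 < a + b * q)
    (h' : 0 < a - b * q) : 0 < a ∧ |b| / a * q < 1 := by
  have hbq : |b| * q < a := by
    simpa only [abs_mul, abs_of_nonneg hq] using
      abs_lt.mpr (⟨by linarith, by linarith⟩ : -a < b * q ∧ b * q < a)
  have ha : 0 < a := hbq.trans_le' (by positivity)
  exact ⟨ha, by rwa [div_mul_eq_mul_div, div_lt_one ha]⟩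

theorem scalesComparably_of_conj (hq : 0 < q) (hμ : μ * q < 1) {S : ℝ →+ ℝ} {a b : ℝ}
    (ha : 0 < a) (hb : |b| ≤ μ * a) (hS : ∀ t, S ((a + b * q) * t) = (a - b * q) * S t) :
    ScalesComparably (.id ℝ) S (maxConjRatio μ q) (a + b * q) := by
  obtain ⟨hlower, hupper⟩ := abs_lt.mp (abs_mul_lt_of_abs_le_mul hq hμ ha hb)
  exact ⟨a + b * q, a - b * q, by linarith, by linarith,
    (add_mul_le_maxConjRatio_mul_iff hq hμ).mpr ((le_abs_self b).trans hb),
    (sub_mul_le_maxConjRatio_mul_iff hq hμ).mpr ((neg_le_abs b).trans hb), fun _ => rfl, hS⟩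

theorem pos_and_abs_le_mul_of_conj (hq : 0 < q) (hμ₀ : 0 ≤ μ) (hμ : μ * q < 1) {e f : ℝ}
    (hpos : 0 < e + f * q) (h : e + f * q ≤ maxConjRatio μ q * (e - f * q))
    (h' : e - f * q ≤ maxConjRatio μ q * (e + f * q)) : 0 < e ∧ |f| ≤ μ * e := by
  rw [add_mul_le_maxConjRatio_mul_iff hq hμ] at h
  rw [sub_mul_le_maxConjRatio_mul_iff hq hμ] at h'
  have hf : |f| ≤ μ * e := abs_le'.mpr ⟨h, h'⟩
  refine ⟨lt_of_not_ge fun he => ?_, hf⟩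
  have hf₀ : f = 0 :=
    abs_nonpos_iff.mp (hf.trans (mul_nonpos_of_nonneg_of_nonpos hμ₀ he))
  simp [hf₀, he.not_gt] at hpos

end Slope

theorem stmt_16_general {p : ℚ} (hirr : Irrational √p) {μ : ℝ} (hμ₀ : 0 ≤ μ) (hμ : μ * √p < 1)
    {ratios : Set ℝ}
    (hratios : ∀ r ∈ ratios, ∃ a b : ℚ, r = a + b * √p ∧ 0 < a ∧ |(b : ℝ)| / a ≤ μ)
    {e f : ℚ} (hz : (e + f * √p : ℝ) ∈ BSet ratios) : 0 < e ∧ |(f : ℝ)| / e ≤ μ := by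
  have hq : 0 < √(p : ℝ) := (Real.sqrt_nonneg _).lt_of_ne' hirr.ne_zero
  obtain ⟨H, m, w, h, hH, hside, hsum⟩ := exists_sides_of_mem_BSet hz
  obtain ⟨S, hSH, hS⟩ :=
    exists_addMonoidHom_conj hirr (Real.sq_sqrt (Real.sqrt_pos.mp hq).le) hH.ne'
  have hscale (r) (hr : r ∈ ratios) : ScalesComparably (.id ℝ) S (maxConjRatio μ √p) r := by
    obtain ⟨a, b, rfl, ha, hb⟩ := hratios r hr
    have ha' : (0 : ℝ) < a := mod_cast ha
    exact scalesComparably_of_conj hq hμ ha' ((div_le_iff₀ ha').mp hb) (hS a b)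
  have hle := two_mul_mul_le_of_sum_map_mul_map hscale hside hsum
  have hle' := two_mul_mul_le_of_sum_map_mul_map (fun r hr => (hscale r hr).symm) hside hsum
  simp only [hS, hSH, AddMonoidHom.id_apply] at hle hle'
  have hHH : 0 < H * H := by positivity
  obtain ⟨he, hf⟩ := pos_and_abs_le_mul_of_conj hq hμ₀ hμ (pos_of_mem_BSet hz)
    (le_of_mul_le_mul_right (by linarith) hHH) (le_of_mul_le_mul_right (by linarith) hHH)
  exact ⟨mod_cast he, (div_le_iff₀ he).mpr hf⟩

/-- Impossibility, case of positive conjugate: if `z = e + f√p ∉ M(x₁)`,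
then `z ∉ B(x₁)`. -/
theorem stmt_16 (p : ℚ) (hp : 0 < p) (hirr : Irrational (Real.sqrt p))
    (a₁ b₁ : ℚ) (x₁ : ℝ) (hx : x₁ = (a₁ : ℝ) + (b₁ : ℝ) * Real.sqrt p)
    (hxpos : 0 < x₁) (hconj : 0 < (a₁ : ℝ) - (b₁ : ℝ) * Real.sqrt p)
    (e f : ℚ) (z : ℝ) (hz : z = (e : ℝ) + (f : ℝ) * Real.sqrt p) (hzpos : 0 < z)
    (hnotM : ¬(0 < e ∧ |f| / e ≤ |b₁| / a₁)) :
    z ∉ BSet {x₁} := by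
  intro hmem
  subst hx hz
  obtain ⟨ha, hμ⟩ := pos_and_abs_div_mul_lt_one (Real.sqrt_nonneg p) hxpos hconj
  exact hnotM (mod_cast stmt_16_general hirr (by positivity) hμ
    (fun _ hr => ⟨a₁, b₁, hr, mod_cast ha, le_rfl⟩) hmem)
end

section
/- Let p be a positive rational number with √p irrational, let a₁, b₁ be rational numbers with x₁ = a₁ + b₁√p > 0 and a₁ − b₁√p < 0 (so b₁ > 0). Let z = e + f√p with e, f ∈ ℚ and z > 0. If z ∉ N(x₁), i.e., it is not the case that (f > 0 and |e|/f ≤ |a₁|/b₁), then z ∉ B(x₁): no rectangle with side ratio z can be tiled by rectangles with side ratio x₁. -/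
/-!
If `φ, ψ : ℝ → ℝ` are additive, then `φ w * ψ h` is an additive function of rectangles. Indeed, on
any finite grid it is the integral of `P' x * Q' y` for polynomials `P, Q` interpolating `φ, ψ`.

Write `r'` for the conjugate of `r ∈ ℚ(√p)`, and let `g : ℝ → ℝ` be additive with
`g (r * t) = r' * g t`. For a `w × h` rectangle the vector
`(A, B, C) = (w * h, -(g w * g h), w * g h - g w * h)` is then additive under tilings, up to a sign
of `C` it does not change when `w` and `h` are exchanged, and for side ratio `r` it is
`(r * t ^ 2, -r' * u ^ 2, (r - r') * (t * u))` with `t, u` a side and its image under `g`. So if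
every tile has side ratio with `k * (r - r') ^ 2 ≤ -(r * r')`, all tiles lie in the convex cone
`0 ≤ A`, `0 ≤ B`, `k * C ^ 2 ≤ A * B`, hence so does the tiled rectangle, and its ratio satisfies
the same inequality. For `r = a + b * √p` and `k = (p - K ^ 2) / (4 * p)` it says `|a| / b ≤ K`.
-/

open MeasureTheory Set

section TilingAdditivity

theorem exists_continuous_intervalIntegral_eq_sub (X : Finset ℝ) (φ : ℝ → ℝ) :
    ∃ u : ℝ → ℝ, Continuous u ∧ ∀ a ∈ X, ∀ b ∈ X, ∫ t in a..b, u t = φ b - φ a := by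
  let P := Lagrange.interpolate X id φ
  have eval_P (a : ℝ) (ha : a ∈ X) : P.eval a = φ a :=
    Lagrange.eval_interpolate_at_node φ Function.injective_id.injOn ha
  refine ⟨fun t ↦ P.derivative.eval t, P.derivative.continuous, fun a ha b hb ↦ ?_⟩
  rw [intervalIntegral.integral_eq_sub_of_hasDerivAt (fun t _ ↦ P.hasDerivAt t)
    (P.derivative.continuous.intervalIntegrable a b), eval_P a ha, eval_P b hb]

theorem exists_continuous_setIntegral_rect_eq (X Y : Finset ℝ) (φ ψ : ℝ →+ ℝ) :
    ∃ F : ℝ × ℝ → ℝ, Continuous F ∧ ∀ x y w h, x ∈ X → x + w ∈ X → y ∈ Y → y + h ∈ Y →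
      0 ≤ w → 0 ≤ h → ∫ q in Icc x (x + w) ×ˢ Icc y (y + h), F q = φ w * ψ h := by
  obtain ⟨u, hu, integral_u⟩ := exists_continuous_intervalIntegral_eq_sub X φ
  obtain ⟨v, hv, integral_v⟩ := exists_continuous_intervalIntegral_eq_sub Y ψ
  refine ⟨fun q ↦ u q.1 * v q.2, by fun_prop, fun x y w h hx hxw hy hyh hw hh ↦ ?_⟩
  rw [Measure.volume_eq_prod, setIntegral_prod_mul, integral_Icc_eq_integral_Ioc,
    integral_Icc_eq_integral_Ioc, ← intervalIntegral.integral_of_le (by linarith),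
    ← intervalIntegral.integral_of_le (by linarith), integral_u x hx _ hxw, integral_v y hy _ hyh,
    map_add, map_add, add_sub_cancel_left, add_sub_cancel_left]

theorem IsRect.isCompact_s17 {R : Set (ℝ × ℝ)} {w h : ℝ} (hR : IsRect R w h) : IsCompact R := by
  obtain ⟨-, -, x, y, rfl⟩ := hR
  exact isCompact_Icc.prod isCompact_Icc

theorem IsRect.convex_s17 {R : Set (ℝ × ℝ)} {w h : ℝ} (hR : IsRect R w h) : Convex ℝ R := by
  obtain ⟨-, -, x, y, rfl⟩ := hR
  exact (convex_Icc _ _).prod (convex_Icc _ _)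

theorem aedisjoint_of_disjoint_interior {E : Type*} [NormedAddCommGroup E] [NormedSpace ℝ E]
    [FiniteDimensional ℝ E] [MeasurableSpace E] [BorelSpace E] (μ : Measure E) [μ.IsAddHaarMeasure]
    {s t : Set E} (hs : Convex ℝ s) (ht : Convex ℝ t) (h : Disjoint (interior s) (interior t)) :
    AEDisjoint μ s t :=
  h.aedisjoint.congr (interior_ae_eq_of_null_frontier (hs.addHaar_frontier μ)).symm
    (interior_ae_eq_of_null_frontier (ht.addHaar_frontier μ)).symm

theorem IsRect.map_mul_map_eq_sum {ι : Type*} [Fintype ι] {W H : ℝ} {T : ι → Set (ℝ × ℝ)}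
    {w h : ι → ℝ} (hR : IsRect (⋃ i, T i) W H) (hT : ∀ i, IsRect (T i) (w i) (h i))
    (hdisj : Pairwise fun i j ↦ Disjoint (interior (T i)) (interior (T j))) (φ ψ : ℝ →+ ℝ) :
    φ W * ψ H = ∑ i, φ (w i) * ψ (h i) := by
  classical
  have integral_add (F : ℝ × ℝ → ℝ) (hF : Continuous F) :
      ∫ q in ⋃ i, T i, F q = ∑ i, ∫ q in T i, F q := by
    rw [integral_iUnion_ae (fun i ↦ (hT i).isCompact_s17.measurableSet.nullMeasurableSet)
      (fun i j hij ↦ aedisjoint_of_disjoint_interior volume (hT i).convex_s17 (hT j).convex_s17 (hdisj hij))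
      (hF.continuousOn.integrableOn_compact hR.isCompact_s17), tsum_fintype]
  obtain ⟨hW, hH, x₀, y₀, hR⟩ := hR
  choose hw hh x y hT using hT
  let X : Finset ℝ := {x₀, x₀ + W} ∪ Finset.univ.image x ∪ Finset.univ.image fun i ↦ x i + w i
  let Y : Finset ℝ := {y₀, y₀ + H} ∪ Finset.univ.image y ∪ Finset.univ.image fun i ↦ y i + h i
  obtain ⟨F, hF, integral_rect⟩ := exists_continuous_setIntegral_rect_eq X Y φ ψ
  calc φ W * ψ H = ∫ q in ⋃ i, T i, F q := by
        rw [hR, integral_rect x₀ y₀ W H] <;> simp [X, Y, hW.le, hH.le]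
    _ = ∑ i, ∫ q in T i, F q := integral_add F hF
    _ = ∑ i, φ (w i) * ψ (h i) := Finset.sum_congr rfl fun i _ ↦ by
        rw [hT i, integral_rect (x i) (y i) (w i) (h i)] <;> simp [X, Y, (hw i).le, (hh i).le]

end TilingAdditivity

section ConjCone

/-- The vector `(A, B, C) = (w * h, -(w' * h'), w * h' - w' * h)` attached to a rectangle with sides
`w, h` and conjugate sides `w', h'` satisfies `0 ≤ B` and `k * C ^ 2 ≤ A * B`. The remaining
inequality `0 ≤ A` of the convex cone always holds for actual rectangles and is left out. A side
ratio `r` with conjugate `r'` is encoded as the rectangle `w, w', h, h' = r, r', 1, 1`. -/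
def ConjCone (k w w' h h' : ℝ) : Prop :=
  w' * h' ≤ 0 ∧ k * (w * h' - w' * h) ^ 2 ≤ w * h * -(w' * h')

theorem ConjCone.swap {k w w' h h' : ℝ} (hc : ConjCone k w w' h h') : ConjCone k h h' w w' := by
  refine ⟨by linarith [hc.1], ?_⟩
  linear_combination hc.2

theorem ConjCone.scale {k r r' : ℝ} (hc : ConjCone k r r' 1 1) (t t' : ℝ) :
    ConjCone k (r * t) (r' * t') t t' := by
  obtain ⟨hr', hk⟩ := hc
  constructor
  · linear_combination t' ^ 2 * hr'
  · linear_combination (t * t') ^ 2 * hk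

theorem ConjCone.of_scale {k r r' t t' : ℝ} (ht : t ≠ 0) (ht' : t' ≠ 0)
    (hc : ConjCone k (r * t) (r' * t') t t') : ConjCone k r r' 1 1 := by
  obtain ⟨hr', hk⟩ := hc
  have ht'_sq : 0 < t' ^ 2 := by positivity
  have htt'_sq : 0 < (t * t') ^ 2 := by positivity
  constructor
  · refine le_of_mul_le_mul_left ?_ ht'_sq
    linear_combination hr'
  · refine le_of_mul_le_mul_left ?_ htt'_sq
    linear_combination hk

theorem mul_sq_sum_le_sum_mul_sum {ι R : Type*} [Field R] [LinearOrder R] [IsStrictOrderedRing R]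
    (s : Finset ι) {k : R} {A B C : ι → R} (hA : ∀ i ∈ s, 0 ≤ A i) (hB : ∀ i ∈ s, 0 ≤ B i)
    (hC : ∀ i ∈ s, k * C i ^ 2 ≤ A i * B i) :
    k * (∑ i ∈ s, C i) ^ 2 ≤ (∑ i ∈ s, A i) * ∑ i ∈ s, B i := by
  rcases le_or_gt k 0 with hk | hk
  · exact (mul_nonpos_of_nonpos_of_nonneg hk (sq_nonneg _)).trans
      (mul_nonneg (Finset.sum_nonneg hA) (Finset.sum_nonneg hB))
  · have cauchy_schwarz : (∑ i ∈ s, C i) ^ 2 ≤ (∑ i ∈ s, A i) * ∑ i ∈ s, B i / k :=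
      Finset.sum_sq_le_sum_mul_sum_of_sq_le_mul s hA (fun i hi ↦ div_nonneg (hB i hi) hk.le)
        fun i hi ↦ by rw [← mul_div_assoc, le_div_iff₀' hk]; exact hC i hi
    rwa [← Finset.sum_div, ← mul_div_assoc, le_div_iff₀' hk] at cauchy_schwarz

theorem TiledBy.conjCone {R : Set (ℝ × ℝ)} {ratios : Set ℝ} (hT : TiledBy R ratios) {W H k : ℝ}
    (hR : IsRect R W H) {g : ℝ →+ ℝ}
    (hratios : ∀ r ∈ ratios, 0 < r →
      ∃ r', (∀ t, g (r * t) = r' * g t) ∧ ConjCone k r r' 1 1) :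
    ConjCone k W (g W) H (g H) := by
  obtain ⟨m, T, w, h, hT, hratio, rfl, hdisj⟩ := hT
  have cone_of_div_mem (w h : ℝ) (hw : 0 < w) (hh : 0 < h) (hwh : w / h ∈ ratios) :
      ConjCone k w (g w) h (g h) := by
    obtain ⟨r', hg, hr'⟩ := hratios _ hwh (div_pos hw hh)
    have hscale := hr'.scale h (g h)
    rwa [← hg, div_mul_cancel₀ w hh.ne'] at hscale
  have tile_cone (i : Fin m) : ConjCone k (w i) (g (w i)) (h i) (g (h i)) := by
    obtain ⟨hw, hh, -⟩ := hT i
    rcases hratio i with hwh | hhw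
    · exact cone_of_div_mem _ _ hw hh hwh
    · exact (cone_of_div_mem _ _ hh hw hhw).swap
  have map_mul_map_eq_sum := hR.map_mul_map_eq_sum hT hdisj
  have area : W * H = ∑ i, w i * h i := map_mul_map_eq_sum (.id ℝ) (.id ℝ)
  have conj_area : -(g W * g H) = ∑ i, -(g (w i) * g (h i)) := by
    rw [map_mul_map_eq_sum g g, Finset.sum_neg_distrib]
  have mixed : W * g H - g W * H = ∑ i, (w i * g (h i) - g (w i) * h i) := by
    rw [Finset.sum_sub_distrib]
    exact congrArg₂ (· - ·) (map_mul_map_eq_sum (.id ℝ) g) (map_mul_map_eq_sum g (.id ℝ))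
  have conj_area_nonneg (i : Fin m) : 0 ≤ -(g (w i) * g (h i)) := neg_nonneg.mpr (tile_cone i).1
  refine ⟨neg_nonneg.mp ?_, ?_⟩
  · rw [conj_area]
    exact Finset.sum_nonneg fun i _ ↦ conj_area_nonneg i
  · rw [area, conj_area, mixed]
    exact mul_sq_sum_le_sum_mul_sum _ (fun i _ ↦ (mul_pos (hT i).1 (hT i).2.1).le)
      (fun i _ ↦ conj_area_nonneg i) fun i _ ↦ (tile_cone i).2

end ConjCone

section QuadraticConjugation

variable {s : ℝ} {p : ℚ}

theorem map_mul_eq_conj_mul {g : ℝ →+ ℝ} (hg : ∀ t, g (s * t) = -s * g t) (a b : ℚ) (t : ℝ) :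
    g ((a + b * s) * t) = (a - b * s) * g t := by
  have map_rat_mul (q : ℚ) (x : ℝ) : g (q * x) = q * g x := by
    simpa only [Rat.smul_def] using map_rat_smul g q x
  rw [add_mul, map_add, mul_assoc, map_rat_mul, map_rat_mul, hg]
  ring

theorem exists_conj_semilinear_ne_zero (hs : Irrational s) (hsp : s ^ 2 = p) {t₀ : ℝ}
    (ht₀ : t₀ ≠ 0) : ∃ g : ℝ →+ ℝ, g t₀ ≠ 0 ∧ ∀ t, g (s * t) = -s * g t := by
  -- `t ↦ ℓ t * s - ℓ (s * t)` is conjugate semilinear for every `ℚ`-linear `ℓ : ℝ → ℝ`. Choosing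
  -- `ℓ` rational-valued with `ℓ t₀ ≠ 0` makes its value at `t₀` irrational.
  obtain ⟨ℓ, hℓ⟩ := Module.Projective.exists_dual_ne_zero ℚ ht₀
  let g : ℝ →+ ℝ := AddMonoidHom.mk' (fun t ↦ ℓ t * s - ℓ (s * t)) fun t u ↦ by
    simp only [mul_add, map_add, Rat.cast_add]
    ring
  refine ⟨g, ?_, fun t ↦ ?_⟩
  · have g_irrational : Irrational (g t₀) := (hs.ratCast_mul hℓ).sub_ratCast (ℓ (s * t₀))
    exact g_irrational.ne_zero
  · have ℓ_sq_mul : ℓ (s * (s * t)) = p * ℓ t := by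
      rw [← mul_assoc, ← sq, hsp, ← Rat.smul_def, map_smul, smul_eq_mul]
    change ℓ (s * t) * s - ((ℓ (s * (s * t)) : ℚ) : ℝ) = -s * (ℓ t * s - ℓ (s * t))
    rw [ℓ_sq_mul, Rat.cast_mul, ← hsp]
    ring

theorem pos_and_conjCone_of_mem_BSet (hs : Irrational s) (hsp : s ^ 2 = p) {ratios : Set ℝ} {k : ℝ}
    (hratios : ∀ r ∈ ratios, 0 < r →
      ∃ a b : ℚ, r = a + b * s ∧ ConjCone k r (a - b * s) 1 1)
    {e f : ℚ} {z : ℝ} (hz : z = e + f * s) (hzB : z ∈ BSet ratios) :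
    0 < z ∧ ConjCone k z (e - f * s) 1 1 := by
  obtain ⟨W, H, R, hR, hzWH, hT⟩ := hzB
  have tiled_cone (g : ℝ →+ ℝ) (hg : ∀ t, g (s * t) = -s * g t) :
      ConjCone k W (g W) H (g H) := by
    refine hT.conjCone hR fun r hr hr_pos ↦ ?_
    obtain ⟨a, b, rfl, hab⟩ := hratios r hr hr_pos
    exact ⟨_, map_mul_eq_conj_mul hg a b, hab⟩
  have ratio_cone (U V : ℝ) (hU : 0 < U) (hV : 0 < V) (hzUV : z = U / V)
      (cone : ∀ g : ℝ →+ ℝ, (∀ t, g (s * t) = -s * g t) → ConjCone k U (g U) V (g V)) :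
      0 < z ∧ ConjCone k z (e - f * s) 1 1 := by
    obtain ⟨g, hgV, hg⟩ := exists_conj_semilinear_ne_zero hs hsp hV.ne'
    have hUz : U = z * V := by rw [hzUV, div_mul_cancel₀ U hV.ne']
    have hgU : g U = (e - f * s) * g V := by rw [hUz, hz, map_mul_eq_conj_mul hg]
    refine ⟨hzUV ▸ div_pos hU hV, .of_scale hV.ne' hgV ?_⟩
    rw [← hgU, ← hUz]
    exact cone g hg
  rcases hzWH with hzWH | hzHW
  · exact ratio_cone W H hR.1 hR.2.1 hzWH tiled_cone
  · exact ratio_cone H W hR.2.1 hR.1 hzHW fun g hg ↦ (tiled_cone g hg).swap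

theorem conjCone_add_sub_iff (hs : s ≠ 0) (K a b : ℝ) :
    ConjCone ((s ^ 2 - K ^ 2) / (4 * s ^ 2)) (a + b * s) (a - b * s) 1 1 ↔
      a - b * s ≤ 0 ∧ a ^ 2 ≤ K ^ 2 * b ^ 2 := by
  have lhs_eq : (s ^ 2 - K ^ 2) / (4 * s ^ 2) * ((a + b * s) * 1 - (a - b * s) * 1) ^ 2 =
      (s ^ 2 - K ^ 2) * b ^ 2 := by
    field_simp
    ring
  rw [ConjCone, lhs_eq, mul_one]
  refine and_congr_right fun _ ↦ ⟨fun h ↦ ?_, fun h ↦ ?_⟩ <;> linear_combination h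

theorem pos_of_pos_of_conj_nonpos {a b : ℚ} (hs : 0 ≤ s) (h : 0 < a + b * s)
    (h' : a - b * s ≤ 0) : 0 < b :=
  Rat.cast_pos.mp (pos_of_mul_pos_left (by linarith : 0 < (b : ℝ) * s) hs)

end QuadraticConjugation

theorem abs_div_le_iff_sq_le {R : Type*} [Field R] [LinearOrder R] [IsStrictOrderedRing R]
    {a b K : R} (hb : 0 < b) (hK : 0 ≤ K) : |a| / b ≤ K ↔ a ^ 2 ≤ K ^ 2 * b ^ 2 := by
  rw [div_le_iff₀ hb, ← mul_pow, sq_le_sq, abs_of_nonneg (mul_nonneg hK hb.le)]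

theorem stmt_17_general {p : ℚ} (hirr : Irrational (Real.sqrt p)) {ratios : Set ℝ} {K : ℚ}
    (hK : 0 ≤ K)
    (hratios : ∀ x ∈ ratios, ∃ a b : ℚ, x = (a : ℝ) + (b : ℝ) * Real.sqrt p ∧
      (a : ℝ) - (b : ℝ) * Real.sqrt p ≤ 0 ∧ |a| / b ≤ K)
    {e f : ℚ} {z : ℝ} (hz : z = (e : ℝ) + (f : ℝ) * Real.sqrt p) (hzB : z ∈ BSet ratios) :
    0 < f ∧ |e| / f ≤ K := by
  have hsqrt : 0 < Real.sqrt p := (Real.sqrt_nonneg _).lt_of_ne' hirr.ne_zero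
  have hsq : Real.sqrt p ^ 2 = p := Real.sq_sqrt (Real.sqrt_pos.mp hsqrt).le
  have cone_iff (a b : ℚ) := conjCone_add_sub_iff hsqrt.ne' K a b
  obtain ⟨hz_pos, hz_cone⟩ := pos_and_conjCone_of_mem_BSet hirr hsq (fun x hx hx_pos ↦ by
    obtain ⟨a, b, rfl, hconj, hab⟩ := hratios x hx
    have hb := pos_of_pos_of_conj_nonpos hsqrt.le hx_pos hconj
    have hab_sq := (abs_div_le_iff_sq_le hb hK).mp hab
    exact ⟨a, b, rfl, (cone_iff a b).mpr ⟨hconj, by exact_mod_cast hab_sq⟩⟩) hz hzB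
  rw [hz] at hz_pos hz_cone
  obtain ⟨hz_conj, hef⟩ := (cone_iff e f).mp hz_cone
  have hf := pos_of_pos_of_conj_nonpos hsqrt.le hz_pos hz_conj
  exact ⟨hf, (abs_div_le_iff_sq_le hf hK).mpr (by exact_mod_cast hef)⟩

/-- Impossibility, case of negative conjugate: if `z = e + f√p ∉ N(x₁)`,
then `z ∉ B(x₁)`. -/
theorem stmt_17 (p : ℚ) (hp : 0 < p) (hirr : Irrational (Real.sqrt p))
    (a₁ b₁ : ℚ) (x₁ : ℝ) (hx : x₁ = (a₁ : ℝ) + (b₁ : ℝ) * Real.sqrt p)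
    (hxpos : 0 < x₁) (hconj : (a₁ : ℝ) - (b₁ : ℝ) * Real.sqrt p < 0)
    (e f : ℚ) (z : ℝ) (hz : z = (e : ℝ) + (f : ℝ) * Real.sqrt p) (hzpos : 0 < z)
    (hnotN : ¬(0 < f ∧ |e| / f ≤ |a₁| / b₁)) :
    z ∉ BSet {x₁} := by
  have hb₁ : 0 < b₁ := pos_of_pos_of_conj_nonpos (Real.sqrt_nonneg _) (hx ▸ hxpos) hconj.le
  exact fun hzB ↦ hnotN <| stmt_17_general hirr (div_nonneg (abs_nonneg a₁) hb₁.le)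
    (fun x hx₁ ↦ ⟨a₁, b₁, hx₁.trans hx, hconj.le, le_rfl⟩) hz hzB
end
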